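/- arXiv:2006.13102 — 2 statements merged into one kernel-verified Lean document; each statement's English description precedes it below -/
import Mathlib

section
/- Let 0 ≤ k < m and let ψ^k ∈ C^∞(ℝⁿ×(ℝⁿ∖{0})) satisfy: (i) J_{i₁j₁} ⋯ J_{i_{m+1}j_{m+1}} ψ^k = 0 for all indices 1 ≤ i₁,j₁,…,i_{m+1},j_{m+1} ≤ n, and (ii) ψ^k(x,tξ) = (t^{m−k}/|t|) ψ^k(x,ξ) for all real t ≠ 0. For 0 ≤ p ≤ k define ψ^p = ((−1)^{k−p}/(C(k,p)(k−p)!)) ⟨ξ,∂_x⟩^{k−p} ψ^k, and for 0 ≤ ℓ ≤ k and indices 1 ≤ i₁,…,i_ℓ ≤ n define Ψ_{i₁…i_ℓ} = ((m−ℓ)!/m!) σ(i₁,…,i_ℓ) Σ_{p=0}^ℓ (−1)^p C(ℓ,p) ∂^ℓ ψ^p/(∂x^{i₁}⋯∂x^{i_p} ∂ξ^{i_{p+1}}⋯∂ξ^{i_ℓ}). Then Ψ_{i₁…i_ℓ} satisfies the (m−ℓ+1)-fold John equations: J_{i'₁j'₁} ⋯ J_{i'_{m−ℓ+1}j'_{m−ℓ+1}}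 Ψ_{i₁…i_ℓ} = 0 for all indices 1 ≤ i'₁,j'₁,…,i'_{m−ℓ+1},j'_{m−ℓ+1} ≤ n. -/
noncomputable section

open MeasureTheory Filter
open scoped RealInnerProductSpace BigOperators

/-- `ℝⁿ` with the Euclidean structure. -/
abbrev En (n : ℕ) := EuclideanSpace ℝ (Fin n)

/-- A symmetric `m`-tensor on `ℝⁿ` (pointwise): a family of reals indexed by
`(i₁,…,i_m)`, invariant under permutations of the indices. -/
def IsSymTensor {n m : ℕ} (F : (Fin m → Fin n) → ℝ) : Prop :=
  ∀ (π : Equiv.Perm (Fin m)) (i : Fin m → Fin n), F (i ∘ π) = F i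

/-- A symmetric `m`-tensor field on `ℝⁿ`. -/
def IsSymField {n m : ℕ} (f : (Fin m → Fin n) → En n → ℝ) : Prop :=
  ∀ (π : Equiv.Perm (Fin m)) (i : Fin m → Fin n), f (i ∘ π) = f i

/-- All components of the field are Schwartz functions. -/
def IsSchwartzField {n m : ℕ} (f : (Fin m → Fin n) → En n → ℝ) : Prop :=
  ∀ i, ∃ φ : SchwartzMap (En n) ℝ, ⇑φ = f i

/-- Symmetrization `σ` of a tensor: average over all permutations of the indices. -/
def symz {n m : ℕ} {α : Type*} [AddCommMonoid α] [Module ℝ α]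
    (F : (Fin m → Fin n) → α) : (Fin m → Fin n) → α :=
  fun i => ((m.factorial : ℝ))⁻¹ • ∑ π : Equiv.Perm (Fin m), F (i ∘ π)

/-- The `q`-th momentum ray transform
`(J^q f)(x,ξ) = ∫ t^q f_{i₁…i_m}(x+tξ) ξ^{i₁}⋯ξ^{i_m} dt`, as a function on all of
`ℝⁿ × ℝⁿ`; its restriction to `TSⁿ⁻¹ = {|ξ|=1, ⟨x,ξ⟩=0}` is `I^q f`. -/
def momRT {n m : ℕ} (q : ℕ) (f : (Fin m → Fin n) → En n → ℝ) (x ξ : En n) : ℝ :=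
  ∫ t : ℝ, t ^ q * ∑ i : Fin m → Fin n, f i (x + t • ξ) * ∏ r, ξ (i r)

/-- Coordinate partial derivative `∂/∂x^j`. -/
def pd {n : ℕ} (j : Fin n) (u : En n → ℝ) : En n → ℝ :=
  fun x => fderiv ℝ u x (EuclideanSpace.single j 1)

/-- Inner differentiation (symmetrized derivative) `d`. -/
def dsym {n m : ℕ} (u : (Fin m → Fin n) → En n → ℝ) :
    (Fin (m + 1) → Fin n) → En n → ℝ :=
  symz (fun i => pd (i (Fin.last m)) (u (fun s => i s.castSucc)))

/-- Iterated inner differentiation `d^k`. -/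
def dpow {n m : ℕ} : (k : ℕ) → ((Fin m → Fin n) → En n → ℝ) →
    (Fin (m + k) → Fin n) → En n → ℝ
  | 0, u => u
  | k + 1, u => dsym (dpow k u)

/-- Divergence `δ`. -/
def divg {n m : ℕ} (u : (Fin (m + 1) → Fin n) → En n → ℝ) :
    (Fin m → Fin n) → En n → ℝ :=
  fun i x => ∑ j : Fin n, pd j (u (Fin.snoc i j)) x

/-- Iterated divergence `δ^k`. -/
def divpow {n : ℕ} : (k : ℕ) → {p : ℕ} → ((Fin (p + k) → Fin n) → En n → ℝ) →
    (Fin p → Fin n) → En n → ℝ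
  | 0, _, u => u
  | k + 1, _, u => divpow k (divg u)

/-- Partial derivative `∂/∂x^j` in the first slot of a function of `(x, ξ)`. -/
def pdx {n : ℕ} (j : Fin n) (F : En n → En n → ℝ) : En n → En n → ℝ :=
  fun x ξ => fderiv ℝ (fun x' => F x' ξ) x (EuclideanSpace.single j 1)

/-- Partial derivative `∂/∂ξ^j` in the second slot of a function of `(x, ξ)`. -/
def pdxi {n : ℕ} (j : Fin n) (F : En n → En n → ℝ) : En n → En n → ℝ :=
  fun x ξ => fderiv ℝ (fun ξ' => F x ξ') ξ (EuclideanSpace.single j 1)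

/-- Iterated `∂x` derivatives along a list of indices. -/
def pdxList {n : ℕ} (l : List (Fin n)) (F : En n → En n → ℝ) : En n → En n → ℝ :=
  l.foldr pdx F

/-- Iterated `∂ξ` derivatives along a list of indices. -/
def pdxiList {n : ℕ} (l : List (Fin n)) (F : En n → En n → ℝ) : En n → En n → ℝ :=
  l.foldr pdxi F

/-- The John operator `J_{ij} = ∂²/∂x^i∂ξ^j − ∂²/∂x^j∂ξ^i`. -/
def johnOp {n : ℕ} (i j : Fin n) (F : En n → En n → ℝ) : En n → En n → ℝ :=
  fun x ξ => pdx i (pdxi j F) x ξ - pdx j (pdxi i F) x ξ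

/-- Iterated John operators `J_{i₁j₁} ⋯ J_{i_r j_r}`. -/
def johnIter {n : ℕ} (l : List (Fin n × Fin n)) (F : En n → En n → ℝ) : En n → En n → ℝ :=
  l.foldr (fun ij G => johnOp ij.1 ij.2 G) F

/-- Sharafutdinov's Schwartz space `𝒮(TSⁿ⁻¹)`: a function on
`TSⁿ⁻¹ = {(x,ξ) : |ξ|=1, ⟨x,ξ⟩=0}` is Schwartz iff it is the restriction of a
Schwartz function on `ℝⁿ × ℝⁿ`. -/
def IsSchwartzOnTS {n : ℕ} (φ : En n → En n → ℝ) : Prop :=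
  ∃ Φ : SchwartzMap (En n × En n) ℝ, ∀ x ξ : En n, ‖ξ‖ = 1 → ⟪x, ξ⟫ = 0 → φ x ξ = Φ (x, ξ)

/-- Symmetric multiplication `i_{x^{⊗k}} : S^m → S^{m+k}`. -/
def iPowTens {n m k : ℕ} (x : En n) (V : (Fin m → Fin n) → ℝ) :
    (Fin (m + k) → Fin n) → ℝ :=
  symz (fun i => (∏ r : Fin k, x (i (Fin.natAdd m r))) * V (fun s => i (Fin.castAdd k s)))

/-- Convolution (contraction) `j_{x^{⊗k}} : S^{m+k} → S^m`. -/
def jPowTens {n m k : ℕ} (x : En n) (F : (Fin (m + k) → Fin n) → ℝ) :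
    (Fin m → Fin n) → ℝ :=
  fun i => ∑ j : Fin k → Fin n, (∏ r, x (j r)) * F (Fin.append i j)

/-- Directional derivative `⟨ξ, ∂_x⟩` in the first slot, along the second
argument. -/
def dirx {n : ℕ} (F : En n → En n → ℝ) : En n → En n → ℝ :=
  fun x ξ => fderiv ℝ (fun x' => F x' ξ) x ξ

/-! Let `S_i` be the operator `(u_p) ↦ (∂u_p/∂ξ^i - ∂u_{p+1}/∂x^i)` on sequences of functions.
Both of its summands commute with those of `S_j`, so expanding a product binomially shows that the
symmetrized sum defining `Ψ` is a multiple of the `0`-th term of `S_{i₁} ⋯ S_{i_ℓ} (ψ^p)`.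

The sequence `(ψ^p)` satisfies `⟨ξ, ∂_x⟩ ψ^{p+1} = -(p+1) ψ^p`, is homogeneous of degree `m-p-1`
in `ξ`, and is annihilated by every product of `m+1` John operators. Each `S_i` preserves these
three properties with `m` replaced by `m-1`. For the John equations this rests on the identity
`∑_j ξ^j J_{ij} = ∂_{x^i} ⟨ξ, ∂_ξ⟩ - ⟨ξ, ∂_x⟩ ∂_{ξ^i}`. All of this is algebra in the Weyl algebra
generated by `∂_x`, `∂_ξ` and `ξ`; analysis enters only through the symmetry of second derivatives
and Euler's identity for homogeneous functions. -/

section Symmetrization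

variable {ι R : Type*} [Fintype ι] [DecidableEq ι]

theorem sum_perm_prod_mul_prod_compl_congr [CommSemiring R] (a b : ι → R) {S T : Finset ι}
    (h : S.card = T.card) :
    ∑ π : Equiv.Perm ι, (∏ s ∈ S, a (π s)) * ∏ s ∈ Sᶜ, b (π s) =
      ∑ π : Equiv.Perm ι, (∏ s ∈ T, a (π s)) * ∏ s ∈ Tᶜ, b (π s) := by
  obtain ⟨τ, hτ⟩ : ∃ τ : Equiv.Perm ι, S.map τ.toEmbedding = T := by
    have := Set.powersetCard.isPretransitive (α := ι) (n := T.card)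
    obtain ⟨τ, hτ⟩ := MulAction.exists_smul_eq (Equiv.Perm ι)
      (⟨S, h⟩ : Set.powersetCard ι T.card) ⟨T, rfl⟩
    exact ⟨τ, (Finset.map_eq_image _ _).trans (congrArg Subtype.val hτ)⟩
  have hτc : Sᶜ.map τ.toEmbedding = Tᶜ := by
    rw [← hτ]
    ext x
    simp
  rw [← Equiv.sum_comp (Equiv.mulRight τ)]
  rw [← hτc, ← hτ]
  simp [Finset.prod_map]

theorem factorial_mul_prod_add_eq_sum_perm [CommSemiring R] (a b : ι → R) (S : ℕ → Finset ι)
    (hS : ∀ p ≤ Fintype.card ι, (S p).card = p) :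
    ((Fintype.card ι).factorial : R) * ∏ s, (a s + b s) =
      ∑ π : Equiv.Perm ι, ∑ p ∈ Finset.range (Fintype.card ι + 1),
        ((Fintype.card ι).choose p : R) *
          ((∏ s ∈ S p, a (π s)) * ∏ s ∈ (S p)ᶜ, b (π s)) := by
  have expand (π : Equiv.Perm ι) :
      ∏ s, (a s + b s) = ∑ T : Finset ι, (∏ s ∈ T, a (π s)) * ∏ s ∈ Tᶜ, b (π s) := by
    rw [← Equiv.prod_comp π, Fintype.prod_add]
  calc ((Fintype.card ι).factorial : R) * ∏ s, (a s + b s)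
      = ∑ T : Finset ι, ∑ π : Equiv.Perm ι, (∏ s ∈ T, a (π s)) * ∏ s ∈ Tᶜ, b (π s) := by
        rw [Finset.sum_comm, ← Finset.sum_congr rfl fun π _ ↦ expand π]
        simp [Fintype.card_perm]
    _ = ∑ p ∈ Finset.range (Fintype.card ι + 1), ∑ T ∈ Finset.univ.powersetCard p,
          ∑ π : Equiv.Perm ι, (∏ s ∈ T, a (π s)) * ∏ s ∈ Tᶜ, b (π s) := by
        rw [← Finset.powerset_univ, Finset.sum_powerset, Finset.card_univ]
    _ = ∑ p ∈ Finset.range (Fintype.card ι + 1), ((Fintype.card ι).choose p : R) *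
          ∑ π : Equiv.Perm ι, (∏ s ∈ S p, a (π s)) * ∏ s ∈ (S p)ᶜ, b (π s) := by
        refine Finset.sum_congr rfl fun p hp ↦ ?_
        have hSp := hS p (Finset.mem_range_succ_iff.mp hp)
        rw [Finset.sum_congr rfl fun T hT ↦ sum_perm_prod_mul_prod_compl_congr a b
          ((Finset.mem_powersetCard.mp hT).2.trans hSp.symm)]
        simp
    _ = _ := by simp only [Finset.mul_sum]; exact Finset.sum_comm

theorem factorial_mul_list_prod_add_eq_sum_perm [CommSemiring R] {l : ℕ} (a b : Fin l → R) :
    (l.factorial : R) * ((List.finRange l).map fun s ↦ a s + b s).prod =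
      ∑ π : Equiv.Perm (Fin l), ∑ p ∈ Finset.range (l + 1), (l.choose p : R) *
        ((((List.finRange l).take p).map fun s ↦ a (π s)).prod *
          (((List.finRange l).drop p).map fun s ↦ b (π s)).prod) := by
  have nodup_take (p : ℕ) : ((List.finRange l).take p).Nodup :=
    (List.nodup_finRange l).sublist (List.take_sublist _ _)
  have nodup_drop (p : ℕ) : ((List.finRange l).drop p).Nodup :=
    (List.nodup_finRange l).sublist (List.drop_sublist _ _)
  have compl_take (p : ℕ) :
      ((List.finRange l).take p).toFinsetᶜ = ((List.finRange l).drop p).toFinset := by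
    refine IsCompl.compl_eq ⟨?_, ?_⟩
    · exact List.disjoint_toFinset_iff_disjoint.mpr
        (List.disjoint_take_drop (List.nodup_finRange l) le_rfl)
    · rw [codisjoint_iff, Finset.sup_eq_union, ← List.toFinset_append, List.take_append_drop,
        List.toFinset_finRange, Finset.top_eq_univ]
  have card_take (p : ℕ) (hp : p ≤ Fintype.card (Fin l)) :
      ((List.finRange l).take p).toFinset.card = p := by
    rw [List.toFinset_card_of_nodup (nodup_take p)]
    simpa using hp
  have := factorial_mul_prod_add_eq_sum_perm a b (fun p ↦ ((List.finRange l).take p).toFinset)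
    card_take
  simp only [compl_take, List.prod_toFinset _ (nodup_take _), List.prod_toFinset _ (nodup_drop _),
    Fintype.card_fin] at this
  rw [← this, Fin.prod_univ_def]

open scoped IsMulCommutative in
theorem factorial_mul_list_prod_add_eq_sum_perm_of_commute [Semiring R] {l : ℕ} (a b : Fin l → R)
    (haa : ∀ s t, Commute (a s) (a t)) (hab : ∀ s t, Commute (a s) (b t))
    (hbb : ∀ s t, Commute (b s) (b t)) :
    (l.factorial : R) * ((List.finRange l).map fun s ↦ a s + b s).prod =
      ∑ π : Equiv.Perm (Fin l), ∑ p ∈ Finset.range (l + 1), (l.choose p : R) *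
        ((((List.finRange l).take p).map fun s ↦ a (π s)).prod *
          (((List.finRange l).drop p).map fun s ↦ b (π s)).prod) := by
  let G : Set R := Set.range a ∪ Set.range b
  have hG : ∀ x ∈ G, ∀ y ∈ G, x * y = y * x := by
    rintro _ (⟨s, rfl⟩ | ⟨s, rfl⟩) _ (⟨t, rfl⟩ | ⟨t, rfl⟩)
    exacts [haa s t, hab s t, (hab t s).symm, hbb s t]
  have := Subsemiring.isMulCommutative_closure hG
  let a' (s : Fin l) : Subsemiring.closure G := ⟨a s, Subsemiring.subset_closure (.inl ⟨s, rfl⟩)⟩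
  let b' (s : Fin l) : Subsemiring.closure G := ⟨b s, Subsemiring.subset_closure (.inr ⟨s, rfl⟩)⟩
  have := congrArg (Subsemiring.closure G).subtype (factorial_mul_list_prod_add_eq_sum_perm a' b')
  simpa only [map_mul, map_add, map_sum, map_natCast, map_list_prod, List.map_map,
    Function.comp_def, Subsemiring.subtype_apply, a', b']
    using this

end Symmetrization

section WeylAlgebra

variable {ι A : Type*} [Ring A]

/-- The canonical commutation relations of the Weyl algebra for `Dx i = ∂/∂x^i`,
`Dξ i = ∂/∂ξ^i` and `ξ i`, multiplication by the `i`-th coordinate of `ξ`, taken in an abstract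
ring. -/
structure WeylRelations [DecidableEq ι] (Dx Dξ ξ : ι → A) : Prop where
  commute_dx_dx : ∀ i j, Commute (Dx i) (Dx j)
  commute_dx_dxi : ∀ i j, Commute (Dx i) (Dξ j)
  commute_dxi_dxi : ∀ i j, Commute (Dξ i) (Dξ j)
  commute_dx_xi : ∀ i j, Commute (Dx i) (ξ j)
  commute_xi_xi : ∀ i j, Commute (ξ i) (ξ j)
  dxi_mul_xi : ∀ i j, Dξ i * ξ j = ξ j * Dξ i + if i = j then 1 else 0

/-- The John operator `J_{ij}` formed from abstract `∂/∂x` and `∂/∂ξ`. -/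
def john (Dx Dξ : ι → A) (i j : ι) : A := Dx i * Dξ j - Dx j * Dξ i

/-- The iterated John operator `J_{i₁j₁} ⋯ J_{i_r j_r}` formed from abstract `∂/∂x` and `∂/∂ξ`. -/
def johnProd (Dx Dξ : ι → A) (L : List (ι × ι)) : A := (L.map fun q ↦ john Dx Dξ q.1 q.2).prod

@[simp]
theorem johnProd_nil (Dx Dξ : ι → A) : johnProd Dx Dξ [] = 1 := rfl

theorem johnProd_cons (Dx Dξ : ι → A) (q : ι × ι) (L : List (ι × ι)) :
    johnProd Dx Dξ (q :: L) = john Dx Dξ q.1 q.2 * johnProd Dx Dξ L :=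
  List.prod_cons

theorem commute_dotProduct [Fintype ι] {b : A} {v w : ι → A} (hv : ∀ j, Commute b (v j))
    (hw : ∀ j, Commute b (w j)) : Commute b (v ⬝ᵥ w) :=
  Commute.sum_right _ _ _ fun j _ ↦ (hv j).mul_right (hw j)

theorem commute_johnProd {Dx Dξ : ι → A} {b : A} (hb : ∀ i j, Commute (john Dx Dξ i j) b)
    (L : List (ι × ι)) : Commute (johnProd Dx Dξ L) b :=
  Commute.list_prod_left _ _ <| by
    simp only [List.forall_mem_map]
    exact fun q _ ↦ hb q.1 q.2

namespace WeylRelations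

variable [DecidableEq ι] {Dx Dξ ξ : ι → A}

theorem commute_john_dx (h : WeylRelations Dx Dξ ξ) (i j c : ι) :
    Commute (john Dx Dξ i j) (Dx c) :=
  ((h.commute_dx_dx i c).mul_left (h.commute_dx_dxi c j).symm).sub_left
    ((h.commute_dx_dx j c).mul_left (h.commute_dx_dxi c i).symm)

theorem commute_john_dxi (h : WeylRelations Dx Dξ ξ) (i j c : ι) :
    Commute (john Dx Dξ i j) (Dξ c) :=
  ((h.commute_dx_dxi i c).mul_left (h.commute_dxi_dxi j c)).sub_left
    ((h.commute_dx_dxi j c).mul_left (h.commute_dxi_dxi i c))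

theorem commute_john_john (h : WeylRelations Dx Dξ ξ) (i j c d : ι) :
    Commute (john Dx Dξ i j) (john Dx Dξ c d) :=
  ((h.commute_john_dx i j c).mul_right (h.commute_john_dxi i j d)).sub_right
    ((h.commute_john_dx i j d).mul_right (h.commute_john_dxi i j c))

theorem john_mul_xi (h : WeylRelations Dx Dξ ξ) (i j c : ι) :
    john Dx Dξ i j * ξ c =
      ξ c * john Dx Dξ i j + ((if j = c then Dx i else 0) - if i = c then Dx j else 0) := by
  simp only [john, sub_mul, mul_sub, mul_assoc, h.dxi_mul_xi, mul_add]
  simp only [← mul_assoc, (h.commute_dx_xi _ _).eq, mul_ite, mul_one, mul_zero]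
  abel

theorem dx_mul_john_sub (h : WeylRelations Dx Dξ ξ) (i j c : ι) :
    Dx i * john Dx Dξ c j - Dx j * john Dx Dξ c i = Dx c * john Dx Dξ i j := by
  simp only [john, mul_sub, ← mul_assoc, (h.commute_dx_dx i c).eq, (h.commute_dx_dx j c).eq,
    (h.commute_dx_dx j i).eq]
  abel

variable [Fintype ι]

theorem dxi_mul_dotProduct (h : WeylRelations Dx Dξ ξ) {i : ι} {v : ι → A}
    (hv : ∀ j, Commute (Dξ i) (v j)) : Dξ i * (ξ ⬝ᵥ v) = (ξ ⬝ᵥ v) * Dξ i + v i := by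
  simp only [dotProduct, Finset.mul_sum, Finset.sum_mul, ← mul_assoc, h.dxi_mul_xi, add_mul,
    ite_mul, one_mul, zero_mul, Finset.sum_add_distrib, Finset.sum_ite_eq, Finset.mem_univ, if_true]
  simp only [mul_assoc, (hv _).eq]

theorem dxi_mul_dirx (h : WeylRelations Dx Dξ ξ) (i : ι) :
    Dξ i * (ξ ⬝ᵥ Dx) = (ξ ⬝ᵥ Dx) * Dξ i + Dx i :=
  h.dxi_mul_dotProduct fun j ↦ (h.commute_dx_dxi j i).symm

theorem dxi_mul_euler (h : WeylRelations Dx Dξ ξ) (i : ι) :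
    Dξ i * (ξ ⬝ᵥ Dξ) = (ξ ⬝ᵥ Dξ) * Dξ i + Dξ i :=
  h.dxi_mul_dotProduct fun j ↦ h.commute_dxi_dxi i j

theorem commute_dx_dirx (h : WeylRelations Dx Dξ ξ) (i : ι) : Commute (Dx i) (ξ ⬝ᵥ Dx) :=
  commute_dotProduct (h.commute_dx_xi i) (h.commute_dx_dx i)

theorem commute_dx_euler (h : WeylRelations Dx Dξ ξ) (i : ι) : Commute (Dx i) (ξ ⬝ᵥ Dξ) :=
  commute_dotProduct (h.commute_dx_xi i) (h.commute_dx_dxi i)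

theorem euler_mul_dirx (h : WeylRelations Dx Dξ ξ) :
    (ξ ⬝ᵥ Dξ) * (ξ ⬝ᵥ Dx) = (ξ ⬝ᵥ Dx) * (ξ ⬝ᵥ Dξ) + ξ ⬝ᵥ Dx := by
  have commute_xi_dirx (i : ι) : Commute (ξ i) (ξ ⬝ᵥ Dx) :=
    commute_dotProduct (h.commute_xi_xi i) fun j ↦ (h.commute_dx_xi j i).symm
  calc (ξ ⬝ᵥ Dξ) * (ξ ⬝ᵥ Dx)
      = ∑ j, (ξ j * (ξ ⬝ᵥ Dx) * Dξ j + ξ j * Dx j) := by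
        simp only [dotProduct.eq_1 ξ Dξ, Finset.sum_mul, mul_assoc, h.dxi_mul_dirx, mul_add]
    _ = (ξ ⬝ᵥ Dx) * (ξ ⬝ᵥ Dξ) + ξ ⬝ᵥ Dx := by
        simp only [(commute_xi_dirx _).eq, mul_assoc, Finset.sum_add_distrib, ← Finset.mul_sum]
        rfl

theorem commute_john_dirx (h : WeylRelations Dx Dξ ξ) (i j : ι) :
    Commute (john Dx Dξ i j) (ξ ⬝ᵥ Dx) := by
  simp only [Commute, SemiconjBy, john, sub_mul, mul_sub, mul_assoc, h.dxi_mul_dirx, mul_add]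
  simp only [← mul_assoc, (h.commute_dx_dirx _).eq, (h.commute_dx_dx i j).eq]
  abel

theorem dotProduct_john (h : WeylRelations Dx Dξ ξ) (i : ι) :
    (ξ ⬝ᵥ john Dx Dξ i) = Dx i * (ξ ⬝ᵥ Dξ) - (ξ ⬝ᵥ Dx) * Dξ i := by
  simp only [dotProduct, john, mul_sub, Finset.mul_sum, Finset.sum_mul, Finset.sum_sub_distrib,
    ← mul_assoc, (h.commute_dx_xi i _).eq]

theorem john_mul_dotProduct_john (h : WeylRelations Dx Dξ ξ) (i j c : ι) :
    john Dx Dξ i j * (ξ ⬝ᵥ john Dx Dξ c) =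
      (ξ ⬝ᵥ john Dx Dξ c) * john Dx Dξ i j + Dx c * john Dx Dξ i j := by
  rw [← h.dx_mul_john_sub i j c]
  simp only [dotProduct, Finset.mul_sum, Finset.sum_mul, ← mul_assoc, h.john_mul_xi, add_mul,
    sub_mul, ite_mul, zero_mul, Finset.sum_add_distrib, Finset.sum_sub_distrib, Finset.sum_ite_eq,
    Finset.mem_univ, if_true]
  simp only [mul_assoc, (h.commute_john_john i j _ _).eq]

theorem johnProd_mul_dotProduct_john (h : WeylRelations Dx Dξ ξ) (L : List (ι × ι)) (c : ι) :
    johnProd Dx Dξ L * (ξ ⬝ᵥ john Dx Dξ c) =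
      (ξ ⬝ᵥ john Dx Dξ c) * johnProd Dx Dξ L + L.length • (Dx c * johnProd Dx Dξ L) := by
  induction L with
  | nil => simp
  | cons q L ih =>
    rw [johnProd_cons, mul_assoc, ih, mul_add, ← mul_assoc, h.john_mul_dotProduct_john,
      mul_smul_comm, ← mul_assoc _ (Dx c), (h.commute_john_dx _ _ c).eq, List.length_cons,
      add_smul, one_smul]
    simp only [add_mul, mul_assoc]
    abel

end WeylRelations

end WeylAlgebra

section MomentumStep

variable {ι K M : Type*} [CommRing K] [AddCommGroup M] [Module K M]

/-- The operator `(u_p) ↦ (∂u_p/∂ξ^i - ∂u_{p+1}/∂x^i)` on sequences. It lowers the rank of a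
momentum family, and its iterates carry `(ψ^p)` to `Ψ`. -/
def momentumStep (Dx Dξ : ι → Module.End K M) (i : ι) : Module.End K (ℕ → M) :=
  -(LinearMap.funLeft K M Nat.succ * (Dx i).compLeft ℕ) + (Dξ i).compLeft ℕ

theorem momentumStep_apply (Dx Dξ : ι → Module.End K M) (i : ι) (u : ℕ → M) (p : ℕ) :
    momentumStep Dx Dξ i u p = Dξ i (u p) - Dx i (u (p + 1)) := by
  simp [momentumStep, neg_add_eq_sub]

theorem list_prod_map_neg_shift (D : ι → Module.End K M) (L : List ι) (u : ℕ → M) (p : ℕ) :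
    (L.map fun i ↦ -(LinearMap.funLeft K M Nat.succ * (D i).compLeft ℕ)).prod u p =
      (-1 : K) ^ L.length • (L.map D).prod (u (p + L.length)) := by
  induction L generalizing p with
  | nil => simp
  | cons i L ih => simp [ih, pow_succ', add_right_comm, add_assoc]

theorem list_prod_map_compLeft (D : ι → Module.End K M) (L : List ι) (u : ℕ → M) (p : ℕ) :
    (L.map fun i ↦ (D i).compLeft ℕ).prod u p = (L.map D).prod (u p) := by
  induction L with
  | nil => simp
  | cons i L ih => simp [ih]

theorem factorial_smul_momentumStep_prod {Dx Dξ : ι → Module.End K M}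
    (hxx : ∀ i j, Commute (Dx i) (Dx j)) (hxξ : ∀ i j, Commute (Dx i) (Dξ j))
    (hξξ : ∀ i j, Commute (Dξ i) (Dξ j)) {l : ℕ} (idx : Fin l → ι) (u : ℕ → M) :
    (l.factorial : K) • (((List.finRange l).map idx).map (momentumStep Dx Dξ)).prod u 0 =
      ∑ π : Equiv.Perm (Fin l), ∑ p ∈ Finset.range (l + 1), ((-1 : K) ^ p * l.choose p) •
        (((((List.finRange l).take p).map fun s ↦ idx (π s)).map Dx).prod
          (((((List.finRange l).drop p).map fun s ↦ idx (π s)).map Dξ).prod (u p))) := by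
  have expansion := congrFun (LinearMap.congr_fun
    (factorial_mul_list_prod_add_eq_sum_perm_of_commute
      (fun s ↦ -(LinearMap.funLeft K M Nat.succ * (Dx (idx s)).compLeft ℕ))
      (fun s ↦ (Dξ (idx s)).compLeft ℕ)
      (fun s t ↦ by
        ext u p
        simpa using LinearMap.congr_fun (hxx (idx s) (idx t)).eq (u (p + 1 + 1)))
      (fun s t ↦ by
        ext u p
        simpa using LinearMap.congr_fun (hxξ (idx s) (idx t)).eq (u (p + 1)))
      (fun s t ↦ by
        ext u p
        simpa using LinearMap.congr_fun (hξξ (idx s) (idx t)).eq (u p))) u) 0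
  simp only [LinearMap.sum_apply, Finset.sum_apply, Module.End.mul_apply,
    Module.End.natCast_apply, Pi.smul_apply] at expansion
  rw [Nat.cast_smul_eq_nsmul, List.map_map]
  refine expansion.trans (Finset.sum_congr rfl fun π _ ↦ Finset.sum_congr rfl fun p hp ↦ ?_)
  have length_take : (((List.finRange l).take p).map fun s ↦ idx (π s)).length = p := by
    simpa using Finset.mem_range_succ_iff.mp hp
  have prod_dx := list_prod_map_neg_shift Dx (((List.finRange l).take p).map fun s ↦ idx (π s))
    ((((List.finRange l).drop p).map fun s ↦ (Dξ (idx (π s))).compLeft ℕ).prod u) 0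
  have prod_dxi := list_prod_map_compLeft Dξ (((List.finRange l).drop p).map fun s ↦ idx (π s)) u p
  rw [length_take, zero_add] at prod_dx
  simp only [List.map_map, Function.comp_def] at prod_dx prod_dxi ⊢
  rw [prod_dx, prod_dxi, mul_comm, mul_smul, Nat.cast_smul_eq_nsmul]

end MomentumStep

section MomentumFamily

variable {ι K M : Type*} [Fintype ι] [Field K] [AddCommGroup M] [Module K M]

/-- A momentum family of rank `m` and order `k`: a sequence whose terms `u_0, …, u_k` satisfy the
relations that hold for the momentum ray transforms `J^0 f, …, J^k f` of a symmetric `m`-tensor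
field `f`, namely `⟨ξ, ∂_x⟩ u_{p+1} = -(p+1) u_p`, homogeneity of degree `m-p-1` in `ξ` (as Euler's
identity), and the `(m+1)`-fold John equations. The terms beyond `u_k` are arbitrary. -/
structure IsMomentumFamily (Dx Dξ ξ : ι → Module.End K M) (m k : ℕ) (u : ℕ → M) : Prop where
  dirx_succ : ∀ p < k, (ξ ⬝ᵥ Dx) (u (p + 1)) = -((p : K) + 1) • u p
  euler : ∀ p ≤ k, (ξ ⬝ᵥ Dξ) (u p) = ((m : K) - p - 1) • u p
  johnProd_eq_zero : ∀ p ≤ k, ∀ L : List (ι × ι), L.length = m + 1 → johnProd Dx Dξ L (u p) = 0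

/-- The momentum family whose `k`-th term is `v`: its `p`-th term is
`((-1)^{k-p} / (C(k,p) (k-p)!)) ⟨ξ, ∂_x⟩^{k-p} v`. -/
def momentumFamily (Dx ξ : ι → Module.End K M) (k : ℕ) (v : M) (p : ℕ) : M :=
  ((-1 : K) ^ (k - p) / (k.choose p * (k - p).factorial)) • ((ξ ⬝ᵥ Dx) ^ (k - p)) v

theorem dirx_momentumFamily_succ [CharZero K] (Dx ξ : ι → Module.End K M) {k p : ℕ} (hp : p < k)
    (v : M) :
    (ξ ⬝ᵥ Dx) (momentumFamily Dx ξ k v (p + 1)) = -((p : K) + 1) • momentumFamily Dx ξ k v p := by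
  obtain ⟨r, rfl⟩ := Nat.exists_eq_add_of_lt hp
  have sub_eq : p + r + 1 - p = r + 1 := by lia
  have sub_succ_eq : p + r + 1 - (p + 1) = r := by lia
  rw [momentumFamily, momentumFamily, map_smul, smul_smul, sub_eq, sub_succ_eq,
    pow_succ' (ξ ⬝ᵥ Dx), Module.End.mul_apply]
  congr 1
  have choose_mul :
      ((p + r + 1).choose (p + 1) : K) * (p + 1) = (p + r + 1).choose p * (r + 1) := by
    exact_mod_cast sub_eq ▸ Nat.choose_succ_right_eq (p + r + 1) p
  have choose_succ_ne : ((p + r + 1).choose (p + 1) : K) ≠ 0 :=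
    Nat.cast_ne_zero.mpr (Nat.choose_pos (by lia)).ne'
  have choose_ne : ((p + r + 1).choose p : K) ≠ 0 :=
    Nat.cast_ne_zero.mpr (Nat.choose_pos (by lia)).ne'
  have factorial_ne : (r.factorial : K) ≠ 0 := Nat.cast_ne_zero.mpr r.factorial_ne_zero
  have succ_ne : (r : K) + 1 ≠ 0 := Nat.cast_add_one_ne_zero r
  rw [Nat.factorial_succ, pow_succ]
  push_cast
  field_simp
  linear_combination -choose_mul

variable {Dx Dξ ξ : ι → Module.End K M} {m k : ℕ} {u : ℕ → M} {v : M}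

theorem IsMomentumFamily.dotProduct_john_johnProd
    (hu : IsMomentumFamily Dx Dξ ξ (m + 1) (k + 1) u) (i : ι) {p : ℕ} (hp : p ≤ k + 1)
    {L : List (ι × ι)} (hL : L.length = m + 1) :
    (ξ ⬝ᵥ john Dx Dξ i) (johnProd Dx Dξ L (u p)) = 0 := by
  rw [dotProduct, LinearMap.sum_apply]
  refine Finset.sum_eq_zero fun j _ ↦ ?_
  have := hu.johnProd_eq_zero p hp ((i, j) :: L) (by simp [hL])
  rw [johnProd_cons, Module.End.mul_apply] at this
  rw [Module.End.mul_apply, this, map_zero]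

variable [DecidableEq ι]

theorem WeylRelations.euler_dirx_pow (h : WeylRelations Dx Dξ ξ) {d : K}
    (hv : (ξ ⬝ᵥ Dξ) v = d • v) (r : ℕ) :
    (ξ ⬝ᵥ Dξ) (((ξ ⬝ᵥ Dx) ^ r) v) = (d + r) • ((ξ ⬝ᵥ Dx) ^ r) v := by
  induction r with
  | zero => simp [hv]
  | succ r ih =>
    rw [pow_succ', Module.End.mul_apply, ← Module.End.mul_apply, h.euler_mul_dirx,
      LinearMap.add_apply, Module.End.mul_apply, ih, map_smul]
    push_cast
    module

theorem isMomentumFamily_momentumFamily [CharZero K] (h : WeylRelations Dx Dξ ξ)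
    (heuler : (ξ ⬝ᵥ Dξ) v = ((m : K) - k - 1) • v)
    (hjohn : ∀ L : List (ι × ι), L.length = m + 1 → johnProd Dx Dξ L v = 0) :
    IsMomentumFamily Dx Dξ ξ m k (momentumFamily Dx ξ k v) where
  dirx_succ p hp := dirx_momentumFamily_succ Dx ξ hp v
  euler p hp := by
    rw [momentumFamily, map_smul, h.euler_dirx_pow heuler, smul_comm, Nat.cast_sub hp]
    congr 1
    ring
  johnProd_eq_zero p _ L hL := by
    have : Commute (johnProd Dx Dξ L) ((ξ ⬝ᵥ Dx) ^ (k - p)) :=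
      commute_johnProd (fun i j ↦ (h.commute_john_dirx i j).pow_right _) L
    rw [momentumFamily, map_smul, ← Module.End.mul_apply, this.eq, Module.End.mul_apply,
      hjohn L hL, map_zero, smul_zero]

namespace IsMomentumFamily

theorem dotProduct_john_apply (h : WeylRelations Dx Dξ ξ)
    (hu : IsMomentumFamily Dx Dξ ξ (m + 1) (k + 1) u) (i : ι) {p : ℕ} (hp : p ≤ k) :
    (ξ ⬝ᵥ john Dx Dξ i) (u (p + 1)) =
      ((p : K) + 1) • Dξ i (u p) + ((m : K) - p) • Dx i (u (p + 1)) := by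
  have dxi_dirx := LinearMap.congr_fun (h.dxi_mul_dirx i) (u (p + 1))
  simp only [Module.End.mul_apply, LinearMap.add_apply] at dxi_dirx
  rw [h.dotProduct_john, LinearMap.sub_apply, Module.End.mul_apply, Module.End.mul_apply,
    eq_sub_of_add_eq dxi_dirx.symm, hu.dirx_succ p (by lia), hu.euler (p + 1) (by lia),
    map_smul, map_smul]
  push_cast
  module

variable [CharZero K]

-- Applying `P = J_{i₁j₁} ⋯ J_{i_{m+1}j_{m+1}}` to the contraction `∑_j ξ^j J_{ij} u_{p+1}` and
-- commuting it past the contraction leaves `(m+1) P ∂_{x^i} u_{p+1}`; the two ways of writing this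
-- differ by `(p+1) P (∂_{ξ^i} u_p - ∂_{x^i} u_{p+1})`.
theorem johnProd_momentumStep (h : WeylRelations Dx Dξ ξ)
    (hu : IsMomentumFamily Dx Dξ ξ (m + 1) (k + 1) u) (i : ι) {p : ℕ} (hp : p ≤ k)
    {L : List (ι × ι)} (hL : L.length = m + 1) :
    johnProd Dx Dξ L (momentumStep Dx Dξ i u p) = 0 := by
  have johnProd_contraction := LinearMap.congr_fun (h.johnProd_mul_dotProduct_john L i) (u (p + 1))
  rw [← (commute_johnProd (fun a b ↦ h.commute_john_dx a b i) L).eq] at johnProd_contraction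
  simp only [Module.End.mul_apply, LinearMap.add_apply, LinearMap.smul_apply,
    hu.dotProduct_john_johnProd i (Nat.succ_le_succ hp) hL, hu.dotProduct_john_apply h i hp,
    zero_add, hL, map_add, map_smul, ← Nat.cast_smul_eq_nsmul K] at johnProd_contraction
  have succ_smul_eq_zero :
      ((p : K) + 1) • johnProd Dx Dξ L (momentumStep Dx Dξ i u p) = 0 := by
    rw [momentumStep_apply, map_sub, smul_sub, eq_sub_of_add_eq johnProd_contraction]
    push_cast
    module
  exact (smul_eq_zero.mp succ_smul_eq_zero).resolve_left (Nat.cast_add_one_ne_zero p)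

theorem momentumStep (h : WeylRelations Dx Dξ ξ)
    (hu : IsMomentumFamily Dx Dξ ξ (m + 1) (k + 1) u) (i : ι) :
    IsMomentumFamily Dx Dξ ξ m k (momentumStep Dx Dξ i u) where
  dirx_succ p hp := by
    have dxi_dirx := LinearMap.congr_fun (h.dxi_mul_dirx i) (u (p + 1))
    have dx_dirx := LinearMap.congr_fun (h.commute_dx_dirx i).eq (u (p + 2))
    simp only [Module.End.mul_apply, LinearMap.add_apply] at dxi_dirx dx_dirx
    rw [momentumStep_apply, momentumStep_apply, map_sub, ← dx_dirx,
      eq_sub_of_add_eq dxi_dirx.symm, hu.dirx_succ p (by lia), hu.dirx_succ (p + 1) (by lia),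
      map_smul, map_smul]
    push_cast
    module
  euler p hp := by
    have dxi_euler := LinearMap.congr_fun (h.dxi_mul_euler i) (u p)
    have dx_euler := LinearMap.congr_fun (h.commute_dx_euler i).eq (u (p + 1))
    simp only [Module.End.mul_apply, LinearMap.add_apply] at dxi_euler dx_euler
    rw [momentumStep_apply, map_sub, ← dx_euler, eq_sub_of_add_eq dxi_euler.symm,
      hu.euler p (by lia), hu.euler (p + 1) (by lia), map_smul, map_smul]
    push_cast
    module
  johnProd_eq_zero _ hp _ hL := hu.johnProd_momentumStep h i hp hL

theorem momentumStep_prod (h : WeylRelations Dx Dξ ξ) (L : List ι)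
    (hu : IsMomentumFamily Dx Dξ ξ (m + L.length) (k + L.length) u) :
    IsMomentumFamily Dx Dξ ξ m k ((L.map (_root_.momentumStep Dx Dξ)).prod u) := by
  induction L generalizing m k with
  | nil => exact hu
  | cons i L ih =>
    rw [List.length_cons, add_comm L.length, ← add_assoc, ← add_assoc] at hu
    exact (ih hu).momentumStep h i

end IsMomentumFamily

end MomentumFamily

section SmoothFunctions

open scoped ContDiff

variable {E F : Type*} [NormedAddCommGroup E] [NormedSpace ℝ E] [NormedAddCommGroup F]
  [NormedSpace ℝ F]

/-- The module of smooth functions on the open set `U`, encoded as functions on the whole space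
that vanish off `U`, so that two of them are equal as soon as they agree on `U`. -/
def smoothFunctions (U : TopologicalSpace.Opens E) (F : Type*) [NormedAddCommGroup F]
    [NormedSpace ℝ F] : Submodule ℝ (E → F) where
  carrier := {f | ContDiffOn ℝ ∞ f U ∧ ∀ q ∉ U, f q = 0}
  add_mem' hf hg := ⟨hf.1.add hg.1, fun q hq ↦ by simp [hf.2 q hq, hg.2 q hq]⟩
  zero_mem' := ⟨contDiffOn_const, fun _ _ ↦ rfl⟩
  smul_mem' c _ hf := ⟨hf.1.const_smul c, fun q hq ↦ by simp [hf.2 q hq]⟩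

namespace smoothFunctions

variable {U : TopologicalSpace.Opens E}

theorem ext_of_mem {f g : smoothFunctions U F} (h : ∀ q ∈ U, f.1 q = g.1 q) : f = g := by
  ext q
  by_cases hq : q ∈ U
  · exact h q hq
  · rw [f.2.2 q hq, g.2.2 q hq]

/-- The element of `smoothFunctions U F` given by a function smooth on `U`. -/
def ofContDiffOn (f : E → F) (hf : ContDiffOn ℝ ∞ f U) : smoothFunctions U F :=
  ⟨(U : Set E).indicator f, hf.congr fun _ hq ↦ Set.indicator_of_mem hq f,
    fun _ hq ↦ Set.indicator_of_notMem hq f⟩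

theorem ofContDiffOn_apply {f : E → F} (hf : ContDiffOn ℝ ∞ f U) {q : E} (hq : q ∈ U) :
    (ofContDiffOn f hf).1 q = f q :=
  Set.indicator_of_mem (s := (U : Set E)) hq f

theorem contDiffAt (f : smoothFunctions U F) {q : E} (hq : q ∈ U) : ContDiffAt ℝ ∞ f.1 q :=
  f.2.1.contDiffAt (U.isOpen.mem_nhds hq)

theorem differentiableAt (f : smoothFunctions U F) {q : E} (hq : q ∈ U) :
    DifferentiableAt ℝ f.1 q :=
  (contDiffAt f hq).differentiableAt (by simp)

theorem contDiffOn_fderiv (f : smoothFunctions U F) : ContDiffOn ℝ ∞ (fderiv ℝ f.1) U :=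
  f.2.1.fderiv_of_isOpen U.isOpen (by simp)

/-- The derivative along the constant vector field `v`, as an operator on smooth functions. -/
def dirDeriv (v : E) : Module.End ℝ (smoothFunctions U F) where
  toFun f := ofContDiffOn (fun q ↦ fderiv ℝ f.1 q v)
    ((contDiffOn_fderiv f).clm_apply contDiffOn_const)
  map_add' f g := ext_of_mem fun q hq ↦ by
    simp [ofContDiffOn_apply _ hq, fderiv_add (differentiableAt f hq) (differentiableAt g hq)]
  map_smul' c f := ext_of_mem fun q hq ↦ by
    simp [ofContDiffOn_apply _ hq, fderiv_const_smul (differentiableAt f hq)]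

theorem dirDeriv_apply (v : E) (f : smoothFunctions U F) {q : E} (hq : q ∈ U) :
    (dirDeriv v f).1 q = fderiv ℝ f.1 q v :=
  ofContDiffOn_apply ((contDiffOn_fderiv f).clm_apply contDiffOn_const) hq

theorem dirDeriv_dirDeriv_apply (v w : E) (f : smoothFunctions U F) {q : E} (hq : q ∈ U) :
    (dirDeriv v (dirDeriv w f)).1 q = fderiv ℝ (fderiv ℝ f.1) q v w := by
  have eventually_eq : (dirDeriv w f).1 =ᶠ[nhds q] fun q ↦ fderiv ℝ f.1 q w :=
    Filter.eventually_of_mem (U.isOpen.mem_nhds hq) fun _ ↦ dirDeriv_apply w f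
  have differentiableAt_fderiv : DifferentiableAt ℝ (fderiv ℝ f.1) q :=
    ((contDiffOn_fderiv f).contDiffAt (U.isOpen.mem_nhds hq)).differentiableAt (by simp)
  rw [dirDeriv_apply _ _ hq, eventually_eq.fderiv_eq,
    fderiv_clm_apply differentiableAt_fderiv (differentiableAt_const w)]
  simp

theorem commute_dirDeriv (v w : E) :
    Commute (dirDeriv v : Module.End ℝ (smoothFunctions U F)) (dirDeriv w) := by
  refine LinearMap.ext fun f ↦ ext_of_mem fun q hq ↦ ?_
  rw [Module.End.mul_apply, Module.End.mul_apply, dirDeriv_dirDeriv_apply _ _ _ hq,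
    dirDeriv_dirDeriv_apply _ _ _ hq]
  exact (contDiffAt f hq).isSymmSndFDerivAt
    (minSmoothness_of_isRCLikeNormedField.trans_le (WithTop.coe_le_coe.mpr le_top)) v w

/-- Multiplication by the linear functional `φ`, as an operator on smooth functions. -/
def mulDual (φ : E →L[ℝ] ℝ) : Module.End ℝ (smoothFunctions U F) where
  toFun f := ⟨fun q ↦ φ q • f.1 q, φ.contDiff.contDiffOn.smul f.2.1,
    fun q hq ↦ (congrArg (φ q • ·) (f.2.2 q hq)).trans (smul_zero _)⟩
  map_add' f g := Subtype.ext <| funext fun q ↦ smul_add (φ q) (f.1 q) (g.1 q)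
  map_smul' c f := Subtype.ext <| funext fun q ↦ smul_comm (φ q) c (f.1 q)

theorem mulDual_apply (φ : E →L[ℝ] ℝ) (f : smoothFunctions U F) (q : E) :
    (mulDual φ f).1 q = φ q • f.1 q := rfl

theorem commute_mulDual (φ χ : E →L[ℝ] ℝ) :
    Commute (mulDual φ : Module.End ℝ (smoothFunctions U F)) (mulDual χ) :=
  LinearMap.ext fun f ↦ Subtype.ext <| funext fun q ↦ smul_comm (φ q) (χ q) (f.1 q)

theorem dirDeriv_mul_mulDual (v : E) (φ : E →L[ℝ] ℝ) :
    (dirDeriv v * mulDual φ : Module.End ℝ (smoothFunctions U F)) =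
      mulDual φ * dirDeriv v + φ v • 1 := by
  refine LinearMap.ext fun f ↦ ext_of_mem fun q hq ↦ ?_
  have fderiv_mulDual :
      fderiv ℝ (mulDual φ f).1 q = φ q • fderiv ℝ f.1 q + φ.smulRight (f.1 q) := by
    exact (fderiv_fun_smul φ.differentiableAt (differentiableAt f hq)).trans (by rw [φ.fderiv])
  simp [dirDeriv_apply _ _ hq, mulDual_apply, fderiv_mulDual]

end smoothFunctions

end SmoothFunctions

section PhaseSpace

open smoothFunctions

variable {n : ℕ} {U : TopologicalSpace.Opens (En n × En n)}

/-- `∂/∂x^j` as an operator on smooth functions of `(x, ξ) ∈ U`. -/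
def partialX (j : Fin n) : Module.End ℝ (smoothFunctions U ℝ) :=
  dirDeriv (EuclideanSpace.single j 1, 0)

/-- `∂/∂ξ^j` as an operator on smooth functions of `(x, ξ) ∈ U`. -/
def partialXi (j : Fin n) : Module.End ℝ (smoothFunctions U ℝ) :=
  dirDeriv (0, EuclideanSpace.single j 1)

/-- Multiplication by the coordinate `ξ^j`, as an operator on smooth functions of `(x, ξ) ∈ U`. -/
def mulXi (j : Fin n) : Module.End ℝ (smoothFunctions U ℝ) :=
  mulDual ((EuclideanSpace.proj j).comp (ContinuousLinearMap.snd ℝ (En n) (En n)))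

theorem weylRelations_smoothFunctions :
    WeylRelations (partialX (U := U)) (partialXi (U := U)) (mulXi (U := U)) where
  commute_dx_dx _ _ := commute_dirDeriv _ _
  commute_dx_dxi _ _ := commute_dirDeriv _ _
  commute_dxi_dxi _ _ := commute_dirDeriv _ _
  commute_dx_xi i j := by
    rw [Commute, SemiconjBy, partialX, mulXi, dirDeriv_mul_mulDual]
    simp
  commute_xi_xi _ _ := commute_mulDual _ _
  dxi_mul_xi i j := by
    rw [partialXi, mulXi, dirDeriv_mul_mulDual]
    simp [eq_comm]

theorem sum_coord_mul_map_single (T : En n →L[ℝ] ℝ) (ξ : En n) :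
    ∑ j, ξ j * T (EuclideanSpace.single j 1) = T ξ := by
  conv_rhs => rw [← (EuclideanSpace.basisFun (Fin n) ℝ).sum_repr ξ]
  simp

theorem mulXi_dotProduct_apply (D : Fin n → Module.End ℝ (smoothFunctions U ℝ))
    (f : smoothFunctions U ℝ) (q : En n × En n) :
    ((mulXi ⬝ᵥ D) f).1 q = ∑ j, q.2 j * (D j f).1 q := by
  simp [dotProduct, mulXi, mulDual_apply]

theorem mulXi_dotProduct_partialX_apply (f : smoothFunctions U ℝ) {q : En n × En n} (hq : q ∈ U) :
    ((mulXi ⬝ᵥ partialX) f).1 q = fderiv ℝ f.1 q (q.2, 0) := by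
  simp only [mulXi_dotProduct_apply, partialX, dirDeriv_apply _ _ hq]
  exact sum_coord_mul_map_single ((fderiv ℝ f.1 q).comp (.inl ℝ _ _)) q.2

theorem mulXi_dotProduct_partialXi_apply (f : smoothFunctions U ℝ) {q : En n × En n} (hq : q ∈ U) :
    ((mulXi ⬝ᵥ partialXi) f).1 q = fderiv ℝ f.1 q (0, q.2) := by
  simp only [mulXi_dotProduct_apply, partialXi, dirDeriv_apply _ _ hq]
  exact sum_coord_mul_map_single ((fderiv ℝ f.1 q).comp (.inr ℝ _ _)) q.2

/-- `F` is a curried form of the smooth function `f` on `U`; its values off `U` are arbitrary. -/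
def Represents (f : smoothFunctions U ℝ) (F : En n → En n → ℝ) : Prop :=
  ∀ x ξ, (x, ξ) ∈ U → F x ξ = f.1 (x, ξ)

namespace Represents

variable {f : smoothFunctions U ℝ} {F : En n → En n → ℝ} {x ξ : En n}

theorem const_smul (h : Represents f F) (c : ℝ) : Represents (c • f) fun x ξ ↦ c * F x ξ :=
  fun x ξ hq ↦ congrArg (c * ·) (h x ξ hq)

theorem sum {κ : Type*} {s : Finset κ} {f : κ → smoothFunctions U ℝ} {F : κ → En n → En n → ℝ}
    (h : ∀ a ∈ s, Represents (f a) (F a)) :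
    Represents (∑ a ∈ s, f a) fun x ξ ↦ ∑ a ∈ s, F a x ξ := fun x ξ hq ↦ by
  simpa using Finset.sum_congr rfl fun a ha ↦ h a ha x ξ hq

theorem fderiv_left (h : Represents f F) (hq : (x, ξ) ∈ U) (v : En n) :
    fderiv ℝ (fun x' ↦ F x' ξ) x v = fderiv ℝ f.1 (x, ξ) (v, 0) := by
  have eventually_eq : (fun x' ↦ F x' ξ) =ᶠ[nhds x] fun x' ↦ f.1 (x', ξ) :=
    ((Continuous.prodMk_left ξ).tendsto x).eventually (U.isOpen.mem_nhds hq) |>.mono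
      fun x' ↦ h x' ξ
  rw [eventually_eq.fderiv_eq, fderiv_fun_comp x (differentiableAt f hq)
    (hasFDerivAt_prodMk_left x ξ).differentiableAt, (hasFDerivAt_prodMk_left x ξ).fderiv]
  rfl

theorem fderiv_right (h : Represents f F) (hq : (x, ξ) ∈ U) (v : En n) :
    fderiv ℝ (fun ξ' ↦ F x ξ') ξ v = fderiv ℝ f.1 (x, ξ) (0, v) := by
  have eventually_eq : (fun ξ' ↦ F x ξ') =ᶠ[nhds ξ] fun ξ' ↦ f.1 (x, ξ') :=
    ((Continuous.prodMk_right x).tendsto ξ).eventually (U.isOpen.mem_nhds hq) |>.mono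
      fun ξ' ↦ h x ξ'
  rw [eventually_eq.fderiv_eq, fderiv_fun_comp ξ (differentiableAt f hq)
    (hasFDerivAt_prodMk_right x ξ).differentiableAt, (hasFDerivAt_prodMk_right x ξ).fderiv]
  rfl

theorem pdx (h : Represents f F) (j : Fin n) : Represents (partialX j f) (pdx j F) :=
  fun _ _ hq ↦ (h.fderiv_left hq _).trans (dirDeriv_apply _ f hq).symm

theorem pdxi (h : Represents f F) (j : Fin n) : Represents (partialXi j f) (pdxi j F) :=
  fun _ _ hq ↦ (h.fderiv_right hq _).trans (dirDeriv_apply _ f hq).symm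

theorem dirx (h : Represents f F) : Represents ((mulXi ⬝ᵥ partialX) f) (dirx F) :=
  fun _ _ hq ↦ (h.fderiv_left hq _).trans (mulXi_dotProduct_partialX_apply f hq).symm

theorem iterate_dirx (h : Represents f F) (r : ℕ) :
    Represents (((mulXi ⬝ᵥ partialX) ^ r) f) (_root_.dirx^[r] F) := by
  induction r with
  | zero => exact h
  | succ r ih =>
    rw [Function.iterate_succ_apply', pow_succ']
    exact ih.dirx

theorem pdxList (h : Represents f F) (L : List (Fin n)) :
    Represents ((L.map partialX).prod f) (pdxList L F) := by
  induction L with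
  | nil => exact h
  | cons j L ih => exact ih.pdx j

theorem pdxiList (h : Represents f F) (L : List (Fin n)) :
    Represents ((L.map partialXi).prod f) (pdxiList L F) := by
  induction L with
  | nil => exact h
  | cons j L ih => exact ih.pdxi j

theorem johnOp (h : Represents f F) (i j : Fin n) :
    Represents (john partialX partialXi i j f) (johnOp i j F) := fun x ξ hq ↦
  congrArg₂ (· - ·) ((h.pdxi j).pdx i x ξ hq) ((h.pdxi i).pdx j x ξ hq)

theorem johnIter (h : Represents f F) (L : List (Fin n × Fin n)) :
    Represents (johnProd partialX partialXi L f) (johnIter L F) := by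
  induction L with
  | nil => exact h
  | cons q L ih => exact ih.johnOp q.1 q.2

theorem johnProd_eq_zero (h : Represents f F) {N : ℕ}
    (hF : ∀ idx jdx : Fin N → Fin n, ∀ x ξ : En n, (x, ξ) ∈ U →
      _root_.johnIter ((List.finRange N).map fun s ↦ (idx s, jdx s)) F x ξ = 0)
    (L : List (Fin n × Fin n)) (hL : L.length = N) : johnProd partialX partialXi L f = 0 := by
  subst hL
  refine ext_of_mem fun q hq ↦ ?_
  have := hF (fun s ↦ (L.get s).1) (fun s ↦ (L.get s).2) q.1 q.2 hq
  rw [← List.ofFn_eq_map] at this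
  simp only [Prod.mk.eta, List.ofFn_get] at this
  exact (h.johnIter L q.1 q.2 hq).symm.trans this

theorem euler_of_homogeneous (h : Represents f F) {d : ℤ}
    (hF : ∀ x ξ : En n, (x, ξ) ∈ U → ∀ᶠ t in nhds (1 : ℝ), F x (t • ξ) = t ^ d * F x ξ) :
    (mulXi ⬝ᵥ partialXi) f = (d : ℝ) • f := by
  refine ext_of_mem fun ⟨x, ξ⟩ hq ↦ ?_
  have radial_deriv : HasDerivAt (fun t : ℝ ↦ F x (t • ξ)) (fderiv ℝ f.1 (x, ξ) (0, ξ)) 1 := by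
    have ray_deriv : HasDerivAt (fun t : ℝ ↦ (x, t • ξ)) (0, ξ) 1 := by
      simpa using (hasDerivAt_const (1 : ℝ) x).prodMk ((hasDerivAt_id (1 : ℝ)).smul_const ξ)
    have ray_one : (x, (1 : ℝ) • ξ) ∈ U := by rwa [one_smul]
    have eventually_eq : (fun t : ℝ ↦ F x (t • ξ)) =ᶠ[nhds 1] fun t ↦ f.1 (x, t • ξ) :=
      (ray_deriv.continuousAt.eventually (U.isOpen.mem_nhds ray_one)).mono fun t ↦ h x (t • ξ)
    have := (differentiableAt f ray_one).hasFDerivAt.comp_hasDerivAt 1 ray_deriv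
    rw [one_smul] at this
    exact this.congr_of_eventuallyEq eventually_eq
  have power_deriv : HasDerivAt (fun t : ℝ ↦ t ^ d * F x ξ) (d * F x ξ) 1 := by
    simpa using (hasDerivAt_zpow d (1 : ℝ) (.inl one_ne_zero)).mul_const (F x ξ)
  rw [mulXi_dotProduct_partialXi_apply f hq,
    radial_deriv.unique (power_deriv.congr_of_eventuallyEq (hF x ξ hq)), h x ξ hq]
  rfl

theorem momentumFamily {k p : ℕ} (h : Represents f F) :
    Represents (momentumFamily partialX mulXi k f p) fun x ξ ↦
      (-1 : ℝ) ^ (k - p) / (k.choose p * (k - p).factorial) * (_root_.dirx^[k - p] F) x ξ :=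
  (h.iterate_dirx (k - p)).const_smul _

theorem factorial_smul_momentumStep_prod {u : ℕ → smoothFunctions U ℝ}
    {ψ : ℕ → En n → En n → ℝ} {l : ℕ} (h : ∀ p ≤ l, Represents (u p) (ψ p)) (idx : Fin l → Fin n) :
    Represents
      ((l.factorial : ℝ) •
        (((List.finRange l).map idx).map (momentumStep partialX partialXi)).prod u 0)
      fun x ξ ↦ ∑ π : Equiv.Perm (Fin l), ∑ p ∈ Finset.range (l + 1), (-1 : ℝ) ^ p * l.choose p *
        _root_.pdxList (((List.finRange l).take p).map fun s ↦ idx (π s))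
          (_root_.pdxiList (((List.finRange l).drop p).map fun s ↦ idx (π s)) (ψ p)) x ξ := by
  have W := weylRelations_smoothFunctions (U := U)
  rw [_root_.factorial_smul_momentumStep_prod W.commute_dx_dx W.commute_dx_dxi W.commute_dxi_dxi]
  exact sum fun π _ ↦ sum fun p hp ↦
    (((h p (Finset.mem_range_succ_iff.mp hp)).pdxiList _).pdxList _).const_smul _

end Represents

end PhaseSpace

theorem john_equations_for_Psi_general {n m k : ℕ} {U : Set (En n × En n)} (hU : IsOpen U)
    {ψk : En n → En n → ℝ}
    (hsmooth : ContDiffOn ℝ (⊤ : ℕ∞) (fun q : En n × En n ↦ ψk q.1 q.2) U)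
    (hJohn : ∀ idx jdx : Fin (m + 1) → Fin n, ∀ x ξ : En n, (x, ξ) ∈ U →
      johnIter ((List.finRange (m + 1)).map fun s ↦ (idx s, jdx s)) ψk x ξ = 0)
    (hhom : ∀ x ξ : En n, (x, ξ) ∈ U → ∀ᶠ t in nhds (1 : ℝ),
      ψk x (t • ξ) = t ^ ((m : ℤ) - k - 1) * ψk x ξ)
    {ψ : ℕ → En n → En n → ℝ}
    (hψ : ∀ p ≤ k, ∀ x ξ : En n, (x, ξ) ∈ U →
      ψ p x ξ = (-1 : ℝ) ^ (k - p) / (k.choose p * (k - p).factorial) * (dirx^[k - p] ψk) x ξ)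
    {l : ℕ} (hlk : l ≤ k) (hlm : l ≤ m) (idx : Fin l → Fin n) {Ψ : En n → En n → ℝ}
    (hΨ : ∀ x ξ : En n, (x, ξ) ∈ U → Ψ x ξ =
      ((m - l).factorial : ℝ) / m.factorial * (l.factorial : ℝ)⁻¹ *
        ∑ π : Equiv.Perm (Fin l), ∑ p ∈ Finset.range (l + 1), (-1 : ℝ) ^ p * l.choose p *
          pdxList (((List.finRange l).take p).map fun s ↦ idx (π s))
            (pdxiList (((List.finRange l).drop p).map fun s ↦ idx (π s)) (ψ p)) x ξ)
    (idx' jdx' : Fin (m - l + 1) → Fin n) {x ξ : En n} (hq : (x, ξ) ∈ U) :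
    johnIter ((List.finRange (m - l + 1)).map fun s ↦ (idx' s, jdx' s)) Ψ x ξ = 0 := by
  lift U to TopologicalSpace.Opens (En n × En n) using hU
  let f : smoothFunctions U ℝ := smoothFunctions.ofContDiffOn _ hsmooth
  have hf : Represents f ψk := fun x ξ hq ↦ (smoothFunctions.ofContDiffOn_apply hsmooth hq).symm
  let u : ℕ → smoothFunctions U ℝ := momentumFamily partialX mulXi k f
  have W := weylRelations_smoothFunctions (U := U)
  have hu : IsMomentumFamily partialX partialXi mulXi m k u :=
    isMomentumFamily_momentumFamily W (by simpa using hf.euler_of_homogeneous hhom)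
      (hf.johnProd_eq_zero hJohn)
  have hu_ψ (p : ℕ) (hp : p ≤ l) : Represents (u p) (ψ p) := fun x ξ hq ↦
    (hψ p (hp.trans hlk) x ξ hq).trans (hf.momentumFamily x ξ hq)
  have hΨ_rep := fun x ξ hq ↦ (hΨ x ξ hq).trans
    (((Represents.factorial_smul_momentumStep_prod hu_ψ idx).const_smul _) x ξ hq)
  have hu_step := IsMomentumFamily.momentumStep_prod (m := m - l) (k := k - l) W
    ((List.finRange l).map idx) (by simpa [hlk, hlm] using hu)
  rw [Represents.johnIter hΨ_rep _ x ξ hq, map_smul, map_smul,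
    hu_step.johnProd_eq_zero 0 (Nat.zero_le _) _ (by simp), smul_zero, smul_zero]
  rfl

/-- if `ψ^k` is smooth on `ℝⁿ×(ℝⁿ∖{0})`, satisfies the `(m+1)`-fold
John equations and the homogeneity `ψ^k(x,tξ) = (t^{m−k}/|t|)ψ^k(x,ξ)`, and the
`ψ^p` are defined by `ψ^p = ((−1)^{k−p}/(C(k,p)(k−p)!)) ⟨ξ,∂_x⟩^{k−p} ψ^k`, then
each symmetrized combination `Ψ_{i₁…i_ℓ}` (for `0 ≤ ℓ ≤ k < m`) satisfies the
`(m−ℓ+1)`-fold John equations. -/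
theorem john_equations_for_Psi
    (n m k : ℕ) (hk : k < m)
    (ψk : En n → En n → ℝ)
    (hsmooth : ContDiffOn ℝ (⊤ : ℕ∞) (fun q : En n × En n => ψk q.1 q.2)
      {q : En n × En n | q.2 ≠ 0})
    (hJohn : ∀ idx jdx : Fin (m + 1) → Fin n, ∀ x ξ : En n, ξ ≠ 0 →
      johnIter ((List.finRange (m + 1)).map (fun s => (idx s, jdx s))) ψk x ξ = 0)
    (hhom : ∀ x ξ : En n, ξ ≠ 0 → ∀ t : ℝ, t ≠ 0 →
      ψk x (t • ξ) = (t ^ ((m : ℤ) - k) / |t|) * ψk x ξ)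
    (ψ : ℕ → En n → En n → ℝ)
    (hψ : ∀ p, p ≤ k → ∀ x ξ : En n,
      ψ p x ξ = ((-1 : ℝ) ^ (k - p) / ((k.choose p) * ((k - p).factorial) : ℝ)) *
        (dirx^[k - p] ψk) x ξ)
    (ℓ : ℕ) (hℓ : ℓ ≤ k) (idx : Fin ℓ → Fin n)
    (Ψ : En n → En n → ℝ)
    (hΨ : ∀ x ξ : En n, Ψ x ξ = (((m - ℓ).factorial : ℝ) / (m.factorial : ℝ)) *
      ((ℓ.factorial : ℝ))⁻¹ *
      ∑ π : Equiv.Perm (Fin ℓ), ∑ p ∈ Finset.range (ℓ + 1),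
        (-1 : ℝ) ^ p * (ℓ.choose p) *
          pdxList (((List.finRange ℓ).take p).map (fun s => idx (π s)))
            (pdxiList (((List.finRange ℓ).drop p).map (fun s => idx (π s)))
              (ψ p)) x ξ) :
    ∀ idx' jdx' : Fin (m - ℓ + 1) → Fin n, ∀ x ξ : En n, ξ ≠ 0 →
      johnIter ((List.finRange (m - ℓ + 1)).map (fun s => (idx' s, jdx' s)))
        Ψ x ξ = 0 := by
  refine fun idx' jdx' x ξ hξ ↦ john_equations_for_Psi_general
    (isOpen_ne.preimage continuous_snd) hsmooth hJohn (fun x ξ hξ ↦ ?_)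
    (fun p hp x ξ _ ↦ hψ p hp x ξ) hℓ (hℓ.trans hk.le) idx (fun x ξ _ ↦ hΨ x ξ) idx' jdx' hξ
  filter_upwards [lt_mem_nhds one_pos] with t ht
  rw [hhom x ξ hξ t ht.ne', abs_of_pos ht, zpow_sub_one₀ ht.ne', div_eq_mul_inv]
end
end

section
/- Let 0 ≤ ℓ ≤ k ≤ m, let (φ⁰,…,φ^k) ∈ (𝒮(T𝕊^{n−1}))^{k+1}, define ψ^p (0 ≤ p ≤ ℓ) by ψ^p(x,ξ) = |ξ|^{m−2p−1} Σ_{r=0}^p (−1)^{p−r} C(p,r) |ξ|^r ⟨ξ,x⟩^{p−r} φ^r(x − (⟨x,ξ⟩/|ξ|²)ξ, ξ/|ξ|), and suppose g_s ∈ 𝒮(S^{m−s}) (0 ≤ s ≤ ℓ−1) satisfy ψ^p = Σ_{s=0}^p (−1)^s C(p,s) s! J^{p−s} g_s for 0 ≤ p ≤ ℓ−1. Set χ^ℓ = ((−1)^ℓ/ℓ!)(ψ^ℓ − Σ_{s=0}^{ℓ−1} (−1)^s C(ℓ,s) s! J^{ℓ−s} g_s). Then for every choice of indices 1 ≤ i₁,j₁,…,i_{m−ℓ+1},j_{m−ℓ+1}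 ≤ n, the restriction (J_{i₁j₁} ⋯ J_{i_{m−ℓ+1}j_{m−ℓ+1}} χ^ℓ)|_{T𝕊^{n−1}} belongs to 𝒮(T𝕊^{n−1}). -/
noncomputable section

open MeasureTheory Filter
open scoped RealInnerProductSpace BigOperators

/-!
Near `T𝕊^{n-1}` the function `χ^ℓ` is the restriction of a Schwartz function on `ℝⁿ × ℝⁿ`: it
agrees with one on the open set `{1/2 < |ξ| < 2, |⟨x, ξ⟩| < 1}`. This property survives
differentiation, hence any number of John operators. It has to be checked for the two ingredients
of `χ^ℓ`.

On this open set the projection onto `T𝕊^{n-1}` differs from the identity by a bounded map of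
temperate growth, so composing with it preserves decay; this gives `ψ^ℓ`.

For the momentum ray transforms one shows that `(x, ξ, t) ↦ h(x + tξ)` agrees on the same open set
times `ℝ` with a Schwartz function, and integrates in `t`. The map `(x, ξ, t) ↦ x + tξ` alone is
not proper, but it becomes so once `⟨x, ξ⟩`, `ξ` and a further quantity which vanishes for `ξ` near
the sphere are adjoined, and there these three range over a compact set. Hence `h(x + tξ)` is the
pullback under a proper map of the tensor product of `h` with a bump function.
-/

open scoped Topology ContDiff SchwartzMap

universe u

section PartialIntegral

-- `Y` and `F` share a universe because the inductions below replace `F` by `Y →L[ℝ] F`.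
variable {Y F : Type u} {T : Type*} [NormedAddCommGroup Y] [NormedSpace ℝ Y]
  [NormedAddCommGroup F] [NormedSpace ℝ F] [NormedAddCommGroup T] [NormedSpace ℝ T]

lemma exists_norm_pow_mul_norm_le_one_add_norm_rpow (H : 𝓢(Y × T, F)) (k l : ℕ) :
    ∃ C : ℝ, ∀ y t, ‖y‖ ^ k * ‖H (y, t)‖ ≤ C * (1 + ‖t‖) ^ (-(l : ℝ)) := by
  obtain ⟨C, hC⟩ : ∃ C : ℝ, ∀ p, (1 + ‖p‖) ^ (k + l) * ‖H p‖ ≤ C :=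
    ⟨_, fun p => by simpa only [norm_iteratedFDeriv_zero] using
      H.one_add_le_sup_seminorm_apply (𝕜 := ℝ) (m := (k + l, 0)) le_rfl le_rfl p⟩
  refine ⟨C, fun y t => ?_⟩
  have hy : ‖y‖ ≤ 1 + ‖(y, t)‖ := (norm_fst_le (y, t)).trans (by linarith)
  have ht : ‖t‖ ≤ ‖(y, t)‖ := norm_snd_le (y, t)
  rw [Real.rpow_neg (by positivity), Real.rpow_natCast, ← div_eq_mul_inv,
    le_div_iff₀ (by positivity)]
  calc ‖y‖ ^ k * ‖H (y, t)‖ * (1 + ‖t‖) ^ l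
      ≤ (1 + ‖(y, t)‖) ^ k * ‖H (y, t)‖ * (1 + ‖(y, t)‖) ^ l := by gcongr
    _ = (1 + ‖(y, t)‖) ^ (k + l) * ‖H (y, t)‖ := by ring
    _ ≤ C := hC (y, t)

/-- The derivative of a Schwartz function on a product in the first variable, again as a Schwartz
function on the product. -/
def partialFDeriv (H : 𝓢(Y × T, F)) : 𝓢(Y × T, Y →L[ℝ] F) :=
  SchwartzMap.postcompCLM
    ((ContinuousLinearMap.compL ℝ Y (Y × T) F).flip (ContinuousLinearMap.inl ℝ Y T))
    (SchwartzMap.fderivCLM ℝ _ _ H)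

lemma hasFDerivAt_partialFDeriv (H : 𝓢(Y × T, F)) (y : Y) (t : T) :
    HasFDerivAt (fun y => H (y, t)) (partialFDeriv H (y, t)) y :=
  H.differentiableAt.hasFDerivAt.comp y (hasFDerivAt_prodMk_left y t)

variable [MeasurableSpace T] (μ : Measure T)

lemma exists_integrable_bound [μ.HasTemperateGrowth] (H : 𝓢(Y × T, F)) (k : ℕ) :
    ∃ b : T → ℝ, Integrable b μ ∧ ∀ y t, ‖y‖ ^ k * ‖H (y, t)‖ ≤ b t := by
  obtain ⟨C, hC⟩ := exists_norm_pow_mul_norm_le_one_add_norm_rpow H k μ.integrablePower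
  exact ⟨_, (Measure.integrable_pow_neg_integrablePower μ).const_mul C, hC⟩

variable [BorelSpace T] [SecondCountableTopology T]

lemma aestronglyMeasurable_slice (H : 𝓢(Y × T, F)) (y : Y) :
    AEStronglyMeasurable (fun t => H (y, t)) μ :=
  (H.continuous.comp (by fun_prop)).aestronglyMeasurable

variable [μ.HasTemperateGrowth]

lemma integrable_slice (H : 𝓢(Y × T, F)) (y : Y) : Integrable (fun t => H (y, t)) μ := by
  obtain ⟨b, hb, hHb⟩ := exists_integrable_bound μ H 0
  exact hb.mono' (aestronglyMeasurable_slice μ H y) (.of_forall fun t => by simpa using hHb y t)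

lemma hasFDerivAt_integral_partialFDeriv (H : 𝓢(Y × T, F)) (y : Y) :
    HasFDerivAt (fun y => ∫ t, H (y, t) ∂μ) (∫ t, partialFDeriv H (y, t) ∂μ) y := by
  obtain ⟨b, hb, hHb⟩ := exists_integrable_bound μ (partialFDeriv H) 0
  exact hasFDerivAt_integral_of_dominated_of_fderiv_le univ_mem
    (.of_forall (aestronglyMeasurable_slice μ H)) (integrable_slice μ H y)
    (aestronglyMeasurable_slice μ _ y) (.of_forall fun t z _ => by simpa using hHb z t) hb
    (.of_forall fun t z _ => hasFDerivAt_partialFDeriv H z t)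

lemma fderiv_integral_eq_integral_partialFDeriv (H : 𝓢(Y × T, F)) :
    fderiv ℝ (fun y => ∫ t, H (y, t) ∂μ) = fun y => ∫ t, partialFDeriv H (y, t) ∂μ :=
  funext fun y => (hasFDerivAt_integral_partialFDeriv μ H y).fderiv

lemma contDiff_integral_slice (n : ℕ) (H : 𝓢(Y × T, F)) :
    ContDiff ℝ n (fun y => ∫ t, H (y, t) ∂μ) := by
  induction n generalizing F with
  | zero =>
    exact contDiff_zero.2 (continuous_iff_continuousAt.2 fun y =>
      (hasFDerivAt_integral_partialFDeriv μ H y).continuousAt)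
  | succ n ih =>
    rw [Nat.cast_succ, contDiff_succ_iff_fderiv, fderiv_integral_eq_integral_partialFDeriv]
    exact ⟨fun y => (hasFDerivAt_integral_partialFDeriv μ H y).differentiableAt, by simp, ih _⟩

lemma exists_norm_pow_mul_norm_iteratedFDeriv_integral_le (k n : ℕ) (H : 𝓢(Y × T, F)) :
    ∃ C : ℝ, ∀ y, ‖y‖ ^ k * ‖iteratedFDeriv ℝ n (fun y => ∫ t, H (y, t) ∂μ) y‖ ≤ C := by
  induction n generalizing F with
  | zero =>
    obtain ⟨b, hb, hHb⟩ := exists_integrable_bound μ H k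
    refine ⟨∫ t, b t ∂μ, fun y => ?_⟩
    calc ‖y‖ ^ k * ‖iteratedFDeriv ℝ 0 (fun y => ∫ t, H (y, t) ∂μ) y‖
        ≤ ‖y‖ ^ k * ∫ t, ‖H (y, t)‖ ∂μ := by
          rw [norm_iteratedFDeriv_zero]
          gcongr
          exact norm_integral_le_integral_norm _
      _ = ∫ t, ‖y‖ ^ k * ‖H (y, t)‖ ∂μ := (integral_const_mul _ _).symm
      _ ≤ ∫ t, b t ∂μ := integral_mono ((integrable_slice μ H y).norm.const_mul _) hb (hHb y)
  | succ n ih =>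
    obtain ⟨C, hC⟩ := ih (partialFDeriv H)
    refine ⟨C, fun y => ?_⟩
    rw [← norm_iteratedFDeriv_fderiv, fderiv_integral_eq_integral_partialFDeriv]
    exact hC y

/-- The partial integral `y ↦ ∫ H (y, t) dμ(t)` of a Schwartz function on a product, as a Schwartz
function of the remaining variable. -/
def partialIntegral (H : 𝓢(Y × T, F)) : 𝓢(Y, F) where
  toFun y := ∫ t, H (y, t) ∂μ
  smooth' := contDiff_infty.2 fun n => contDiff_integral_slice μ n H
  decay' k n := exists_norm_pow_mul_norm_iteratedFDeriv_integral_le μ k n H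

end PartialIntegral

section TensorProduct

variable {E E' F : Type*} [NormedAddCommGroup E] [NormedSpace ℝ E]
  [NormedAddCommGroup E'] [NormedSpace ℝ E'] [NormedAddCommGroup F] [NormedSpace ℝ F]

lemma norm_iteratedFDeriv_comp_clm_le {f : E' → F} (hf : ContDiff ℝ ∞ f) {L : E →L[ℝ] E'}
    (hL : ‖L‖ ≤ 1) (n : ℕ) (x : E) :
    ‖iteratedFDeriv ℝ n (f ∘ L) x‖ ≤ ‖iteratedFDeriv ℝ n f (L x)‖ := by
  rw [L.iteratedFDeriv_comp_right hf x (mod_cast le_top)]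
  refine (ContinuousMultilinearMap.norm_compContinuousLinearMap_le _ _).trans ?_
  exact mul_le_of_le_one_right (norm_nonneg _)
    (Finset.prod_le_one (fun _ _ => norm_nonneg _) fun _ _ => hL)

lemma exists_norm_pow_mul_norm_iteratedFDeriv_tensor_le (u : 𝓢(E, ℝ)) (f : 𝓢(E', F)) (k n : ℕ) :
    ∃ C : ℝ, ∀ p : E × E', ‖p‖ ^ k * ‖iteratedFDeriv ℝ n (fun p => u p.1 • f p.2) p‖ ≤ C := by
  let U (k i : ℕ) := SchwartzMap.seminorm ℝ k i u
  let V (k i : ℕ) := SchwartzMap.seminorm ℝ k i f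
  refine ⟨∑ i ∈ Finset.range (n + 1), n.choose i * (U k i * V 0 (n - i) + U 0 i * V k (n - i)),
    fun p => ?_⟩
  have hpow : ‖p‖ ^ k ≤ ‖p.1‖ ^ k + ‖p.2‖ ^ k := by
    rcases max_choice ‖p.1‖ ‖p.2‖ with h | h <;>
    · rw [Prod.norm_def, h]
      simp
  have hleibniz := norm_iteratedFDeriv_smul_le (𝕜 := ℝ) (n := n) (N := ∞)
    ((u.smooth ⊤).comp (contDiff_fst (F := E'))) ((f.smooth ⊤).comp (contDiff_snd (E := E))) p
    (mod_cast le_top)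
  refine (mul_le_mul_of_nonneg_left hleibniz (by positivity)).trans ?_
  rw [Finset.mul_sum]
  refine Finset.sum_le_sum fun i _ => ?_
  have hu := norm_iteratedFDeriv_comp_clm_le (u.smooth ⊤)
    (ContinuousLinearMap.norm_fst_le ℝ E E') i p
  have hf := norm_iteratedFDeriv_comp_clm_le (f.smooth ⊤)
    (ContinuousLinearMap.norm_snd_le ℝ E E') (n - i) p
  calc _ ≤ (‖p.1‖ ^ k + ‖p.2‖ ^ k) * (n.choose i * ‖iteratedFDeriv ℝ i u p.1‖ *
          ‖iteratedFDeriv ℝ (n - i) f p.2‖) := by gcongr <;> assumption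
    _ = n.choose i * ((‖p.1‖ ^ k * ‖iteratedFDeriv ℝ i u p.1‖) *
            (‖p.2‖ ^ 0 * ‖iteratedFDeriv ℝ (n - i) f p.2‖) +
          (‖p.1‖ ^ 0 * ‖iteratedFDeriv ℝ i u p.1‖) *
            (‖p.2‖ ^ k * ‖iteratedFDeriv ℝ (n - i) f p.2‖)) := by ring
    _ ≤ _ := by gcongr <;> exact SchwartzMap.le_seminorm ℝ _ _ _ _

/-- The tensor product `(x, y) ↦ u x • f y` of two Schwartz functions. -/
def schwartzTensor (u : 𝓢(E, ℝ)) (f : 𝓢(E', F)) : 𝓢(E × E', F) where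
  toFun p := u p.1 • f p.2
  smooth' := ((u.smooth ⊤).comp contDiff_fst).smul ((f.smooth ⊤).comp contDiff_snd)
  decay' := exists_norm_pow_mul_norm_iteratedFDeriv_tensor_le u f

end TensorProduct

section TemperateGrowth

variable {D E F : Type*} [NormedAddCommGroup D] [NormedSpace ℝ D] [NormedAddCommGroup E]
  [NormedSpace ℝ E] [NormedAddCommGroup F] [NormedSpace ℝ F]

@[fun_prop]
lemma hasTemperateGrowth_fst : (fun p : E × F => p.1).HasTemperateGrowth :=
  (ContinuousLinearMap.fst ℝ E F).hasTemperateGrowth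

@[fun_prop]
lemma hasTemperateGrowth_snd : (fun p : E × F => p.2).HasTemperateGrowth :=
  (ContinuousLinearMap.snd ℝ E F).hasTemperateGrowth

@[fun_prop]
lemma hasTemperateGrowth_prodMk {f : D → E} {g : D → F} (hf : f.HasTemperateGrowth)
    (hg : g.HasTemperateGrowth) : (fun x => (f x, g x)).HasTemperateGrowth := by
  have h := ((ContinuousLinearMap.inl ℝ E F).hasTemperateGrowth.comp hf).add
    ((ContinuousLinearMap.inr ℝ E F).hasTemperateGrowth.comp hg)
  simpa [Function.comp_def, Pi.add_def] using h

@[fun_prop]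
lemma hasTemperateGrowth_inner {V : Type*} [NormedAddCommGroup V] [InnerProductSpace ℝ V]
    {f g : D → V} (hf : f.HasTemperateGrowth) (hg : g.HasTemperateGrowth) :
    (fun x => ⟪f x, g x⟫).HasTemperateGrowth :=
  (innerSL ℝ (E := V)).bilinear_hasTemperateGrowth hf hg

@[fun_prop]
lemma hasTemperateGrowth_euclideanSpace_apply {ι : Type*} [Fintype ι] (j : ι)
    {f : D → EuclideanSpace ℝ ι} (hf : f.HasTemperateGrowth) :
    (fun x => f x j).HasTemperateGrowth :=
  (EuclideanSpace.proj (𝕜 := ℝ) j).hasTemperateGrowth.comp hf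

@[fun_prop]
lemma hasTemperateGrowth_prod {ι : Type*} {s : Finset ι} {f : ι → D → ℝ}
    (hf : ∀ i ∈ s, (f i).HasTemperateGrowth) :
    (fun x => ∏ i ∈ s, f i x).HasTemperateGrowth := by
  induction s using Finset.cons_induction with
  | empty => simp [Function.HasTemperateGrowth.const]
  | cons i s hi ih =>
    simp only [Finset.forall_mem_cons, Finset.prod_cons] at hf ⊢
    exact hf.1.fun_mul (ih hf.2)

@[fun_prop]
lemma hasTemperateGrowth_schwartzMap_comp (Φ : 𝓢(E, F)) {f : D → E} (hf : f.HasTemperateGrowth) :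
    (fun x => Φ (f x)).HasTemperateGrowth :=
  Φ.hasTemperateGrowth.comp hf

end TemperateGrowth

/-- `f` agrees on `S` with a Schwartz function on the whole space. For functions on `TSⁿ⁻¹`, i.e.
for `S = TSⁿ⁻¹ ⊆ ℝⁿ × ℝⁿ`, this is `IsSchwartzOnTS`. -/
def IsSchwartzOn {D F : Type*} [NormedAddCommGroup D] [NormedSpace ℝ D] [NormedAddCommGroup F]
    [NormedSpace ℝ F] (S : Set D) (f : D → F) : Prop :=
  ∃ Φ : 𝓢(D, F), Set.EqOn f Φ S

namespace IsSchwartzOn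

variable {D E F : Type*} [NormedAddCommGroup D] [NormedSpace ℝ D] [NormedAddCommGroup E]
  [NormedSpace ℝ E] [NormedAddCommGroup F] [NormedSpace ℝ F] {S : Set D} {T : Set E} {f g : D → F}

lemma congr (hf : IsSchwartzOn S f) (hgf : Set.EqOn g f S) : IsSchwartzOn S g :=
  hf.imp fun _ hΦ => hgf.trans hΦ

lemma sub (hf : IsSchwartzOn S f) (hg : IsSchwartzOn S g) :
    IsSchwartzOn S (fun x => f x - g x) := by
  obtain ⟨Φ, hΦ⟩ := hf
  obtain ⟨Ψ, hΨ⟩ := hg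
  exact ⟨Φ - Ψ, fun x hx => congrArg₂ (· - ·) (hΦ hx) (hΨ hx)⟩

lemma sum {ι : Type*} (s : Finset ι) {f : ι → D → F} (hf : ∀ i ∈ s, IsSchwartzOn S (f i)) :
    IsSchwartzOn S (fun x => ∑ i ∈ s, f i x) := by
  choose! Φ hΦ using hf
  refine ⟨∑ i ∈ s, Φ i, fun x hx => ?_⟩
  rw [sum_apply]
  exact Finset.sum_congr rfl fun i hi => hΦ i hi hx

lemma temperate_smul (hf : IsSchwartzOn S f) {g : D → ℝ} (hg : g.HasTemperateGrowth) :
    IsSchwartzOn S (fun x => g x • f x) := by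
  obtain ⟨Φ, hΦ⟩ := hf
  refine ⟨SchwartzMap.smulLeftCLM F g Φ, fun x hx => ?_⟩
  simp only [SchwartzMap.smulLeftCLM_apply_apply hg, hΦ hx]

lemma comp_smul (hf : IsSchwartzOn S f) {u : E → ℝ} (hu : IsSchwartzOn T u) {θ : D → E}
    (hθ : θ.HasTemperateGrowth) (hST : Set.MapsTo θ S T) :
    IsSchwartzOn S (fun x => u (θ x) • f x) := by
  obtain ⟨Ψ, hΨ⟩ := hu
  have hΨθ : (fun x => Ψ (θ x)).HasTemperateGrowth := by fun_prop
  exact (hf.temperate_smul hΨθ).congr fun x hx => by simp only [hΨ (hST hx)]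

lemma comp {f : E → F} (hf : IsSchwartzOn T f) {θ : D → E} (hθ : θ.HasTemperateGrowth)
    (hθ_proper : ∃ (k : ℕ) (C : ℝ), ∀ x, ‖x‖ ≤ C * (1 + ‖θ x‖) ^ k) (hST : Set.MapsTo θ S T) :
    IsSchwartzOn S (fun x => f (θ x)) := by
  obtain ⟨Φ, hΦ⟩ := hf
  exact ⟨SchwartzMap.compCLM ℝ hθ hθ_proper Φ, fun x hx => hΦ (hST hx)⟩

lemma comp_add_of_bounded {T : Set D} {f : D → F} (hf : IsSchwartzOn T f) {τ : D → D}
    (hτ : τ.HasTemperateGrowth) {C : ℝ} (hC : ∀ x, ‖τ x‖ ≤ C)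
    (hST : Set.MapsTo (fun x => x + τ x) S T) : IsSchwartzOn S (fun x => f (x + τ x)) := by
  refine hf.comp (by fun_prop) ⟨1, 1 + C, fun x => ?_⟩ hST
  have hx : ‖x‖ ≤ ‖x + τ x‖ + ‖τ x‖ := by simpa using norm_sub_le (x + τ x) (τ x)
  have hC0 : 0 ≤ C := (norm_nonneg _).trans (hC x)
  nlinarith [hC x, norm_nonneg (x + τ x), mul_nonneg hC0 (norm_nonneg (x + τ x))]

lemma differentiableAt (hf : IsSchwartzOn S f) (hS : IsOpen S) {x : D} (hx : x ∈ S) :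
    DifferentiableAt ℝ f x := by
  obtain ⟨Φ, hΦ⟩ := hf
  exact Φ.differentiableAt.congr_of_eventuallyEq (hΦ.eventuallyEq_of_mem (hS.mem_nhds hx))

lemma fderiv_apply (hf : IsSchwartzOn S f) (hS : IsOpen S) (v : D) :
    IsSchwartzOn S (fun x => fderiv ℝ f x v) := by
  obtain ⟨Φ, hΦ⟩ := hf
  refine ⟨SchwartzMap.evalCLM ℝ D F v (SchwartzMap.fderivCLM ℝ D F Φ), fun x hx => ?_⟩
  simp only [SchwartzMap.evalCLM_apply_apply, SchwartzMap.fderivCLM_apply,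
    (hΦ.eventuallyEq_of_mem (hS.mem_nhds hx)).fderiv_eq]

lemma integral_right {Y G : Type u} {T : Type*} [NormedAddCommGroup Y] [NormedSpace ℝ Y]
    [NormedAddCommGroup G] [NormedSpace ℝ G] [NormedAddCommGroup T] [NormedSpace ℝ T]
    [MeasurableSpace T] [BorelSpace T] [SecondCountableTopology T] {μ : Measure T}
    [μ.HasTemperateGrowth] {S : Set Y} {H : Y × T → G} (hH : IsSchwartzOn (S ×ˢ Set.univ) H) :
    IsSchwartzOn S (fun y => ∫ t, H (y, t) ∂μ) := by
  obtain ⟨Φ, hΦ⟩ := hH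
  exact ⟨partialIntegral μ Φ, fun y hy => integral_congr_ae
    (.of_forall fun t => hΦ (Set.mk_mem_prod hy (Set.mem_univ t)))⟩

lemma tensor {u : E → ℝ} (hu : IsSchwartzOn T u) (hf : IsSchwartzOn S f) :
    IsSchwartzOn (T ×ˢ S) (fun p => u p.1 • f p.2) := by
  obtain ⟨Φ, hΦ⟩ := hu
  obtain ⟨Ψ, hΨ⟩ := hf
  exact ⟨schwartzTensor Φ Ψ, fun p hp => congrArg₂ (· • ·) (hΦ hp.1) (hΨ hp.2)⟩

end IsSchwartzOn

lemma isSchwartzOn_of_contDiffOn {V F : Type*} [NormedAddCommGroup V] [NormedSpace ℝ V]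
    [FiniteDimensional ℝ V] [NormedAddCommGroup F] [NormedSpace ℝ F] {K U : Set V} {f : V → F}
    (hf : ContDiffOn ℝ ∞ f U) (hU : IsOpen U) (hK : IsCompact K) (hKU : K ⊆ U) :
    IsSchwartzOn K f := by
  obtain ⟨L, hL, hKL, hLU⟩ := exists_compact_between hK hU hKU
  obtain ⟨a, ha1, ha0, -⟩ := exists_contMDiffMap_one_nhds_of_subset_interior
    (modelWithCornersSelf ℝ V) (n := (⊤ : ℕ∞)) hK.isClosed hKL
  have hsupp : tsupport a ⊆ L :=
    closure_minimal (fun x hx => by_contra fun hxL => hx (ha0 x hxL)) hL.isClosed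
  have hcompact : HasCompactSupport (fun x => a x • f x) :=
    hL.of_isClosed_subset (isClosed_tsupport _) ((tsupport_smul_subset_left _ _).trans hsupp)
  have hsmooth : ContDiff ℝ ∞ (fun x => a x • f x) := by
    refine (contMDiff_of_tsupport fun x hx => ContDiffAt.contMDiffAt ?_).contDiff
    have hxU : U ∈ 𝓝 x := hU.mem_nhds (hLU (hsupp (tsupport_smul_subset_left _ _ hx)))
    exact a.contMDiff.contDiff.contDiffAt.smul (hf.contDiffAt hxU)
  refine ⟨hcompact.toSchwartzMap hsmooth, fun x hx => ?_⟩
  simp [ha1.self_of_nhdsSet x hx]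

section TangentSphere

/-- A compact annulus around the unit sphere, on which functions smooth away from `0` agree with
Schwartz functions. -/
def sphereAnnulus (V : Type*) [NormedAddCommGroup V] : Set V := {ξ | ‖ξ‖ ∈ Set.Icc (1 / 2) 2}

/-- The set `TS = {(x, ξ) : |ξ| = 1, ⟨x, ξ⟩ = 0}` as a subset of `V × V`. -/
def tangentSphere (V : Type*) [NormedAddCommGroup V] [InnerProductSpace ℝ V] : Set (V × V) :=
  {p | ‖p.2‖ = 1 ∧ ⟪p.1, p.2⟫ = 0}

/-- A neighbourhood of `TS` in `V × V`, open and of uniform size, so that it stays away from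
`ξ = 0` while `⟨x, ξ⟩` remains bounded on it. -/
def tangentSphereNhd (V : Type*) [NormedAddCommGroup V] [InnerProductSpace ℝ V] : Set (V × V) :=
  {p | ‖p.2‖ ∈ Set.Ioo (1 / 2) 2 ∧ ⟪p.1, p.2⟫ ∈ Set.Ioo (-1) 1}

variable {V F : Type*} [NormedAddCommGroup V] [NormedAddCommGroup F] [NormedSpace ℝ F]

lemma norm_pos_of_mem_sphereAnnulus {ξ : V} (hξ : ξ ∈ sphereAnnulus V) : 0 < ‖ξ‖ :=
  one_half_pos.trans_le hξ.1

variable [InnerProductSpace ℝ V]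

lemma isOpen_tangentSphereNhd : IsOpen (tangentSphereNhd V) :=
  (isOpen_Ioo.preimage (by fun_prop)).inter (isOpen_Ioo.preimage (by fun_prop))

lemma tangentSphere_subset_tangentSphereNhd : tangentSphere V ⊆ tangentSphereNhd V := by
  rintro p ⟨hp1, hp0⟩
  norm_num [tangentSphereNhd, hp1, hp0]

lemma mapsTo_snd_tangentSphereNhd :
    Set.MapsTo Prod.snd (tangentSphereNhd V) (sphereAnnulus V) :=
  fun _ hp => Set.Ioo_subset_Icc_self hp.1

lemma mapsTo_inner_tangentSphereNhd :
    Set.MapsTo (fun p : V × V => ⟪p.1, p.2⟫) (tangentSphereNhd V) (Set.Icc (-1) 1) :=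
  fun _ hp => Set.Ioo_subset_Icc_self hp.2

lemma norm_pos_of_mem_tangentSphereNhd {p : V × V} (hp : p ∈ tangentSphereNhd V) : 0 < ‖p.2‖ :=
  norm_pos_of_mem_sphereAnnulus (mapsTo_snd_tangentSphereNhd hp)

/-- The retraction `(x, ξ) ↦ (x - (⟨x, ξ⟩ / |ξ|²) ξ, ξ / |ξ|)` of `V × (V ∖ {0})` onto `TS`. -/
def tangentProj (p : V × V) : V × V :=
  (p.1 - (⟪p.1, p.2⟫ / ‖p.2‖ ^ 2) • p.2, ‖p.2‖⁻¹ • p.2)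

lemma tangentProj_mem_tangentSphere {p : V × V} (hp : 0 < ‖p.2‖) :
    tangentProj p ∈ tangentSphere V := by
  refine ⟨?_, ?_⟩
  · simp [tangentProj, norm_smul, hp.ne']
  · simp only [tangentProj, inner_smul_right, inner_sub_left, real_inner_smul_left,
      real_inner_self_eq_norm_sq]
    field_simp
    ring

lemma contDiffAt_norm_zpow (z : ℤ) {ξ : V} (hξ : ξ ≠ 0) :
    ContDiffAt ℝ ∞ (fun ξ : V => ‖ξ‖ ^ z) ξ := by
  obtain ⟨k, rfl | rfl⟩ := z.eq_nat_or_neg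
  · simpa only [zpow_natCast] using (contDiffAt_norm ℝ hξ).pow k
  · simp only [zpow_neg, zpow_natCast]
    exact ((contDiffAt_norm ℝ hξ).pow k).inv (pow_ne_zero k (norm_ne_zero_iff.2 hξ))

variable [FiniteDimensional ℝ V]

lemma isCompact_sphereAnnulus : IsCompact (sphereAnnulus V) :=
  (isCompact_closedBall (0 : V) 2).of_isClosed_subset (isClosed_Icc.preimage continuous_norm)
    fun _ hξ => by simpa using hξ.2

lemma isSchwartzOn_sphereAnnulus {u : V → F} (hu : ∀ ξ ≠ 0, ContDiffAt ℝ ∞ u ξ) :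
    IsSchwartzOn (sphereAnnulus V) u :=
  isSchwartzOn_of_contDiffOn (fun ξ hξ => (hu ξ hξ).contDiffWithinAt) isOpen_compl_singleton
    isCompact_sphereAnnulus fun _ hξ => norm_pos_iff.1 (norm_pos_of_mem_sphereAnnulus hξ)

lemma isSchwartzOn_sphereAnnulus_norm_zpow (z : ℤ) :
    IsSchwartzOn (sphereAnnulus V) (fun ξ => ‖ξ‖ ^ z) :=
  isSchwartzOn_sphereAnnulus fun _ hξ => contDiffAt_norm_zpow z hξ

lemma exists_bounded_tangentProj_eq_add : ∃ (τ : V × V → V × V) (C : ℝ), τ.HasTemperateGrowth ∧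
    (∀ p, ‖τ p‖ ≤ C) ∧ ∀ p ∈ tangentSphereNhd V, tangentProj p = p + τ p := by
  have hid : IsSchwartzOn (Set.Icc (-1) 1) fun s : ℝ => s :=
    isSchwartzOn_of_contDiffOn contDiff_id.contDiffOn isOpen_univ isCompact_Icc
      (Set.subset_univ _)
  obtain ⟨b, hb⟩ := hid
  obtain ⟨v, hv⟩ : IsSchwartzOn (sphereAnnulus V) fun ξ => ‖ξ‖ ^ (-2 : ℤ) • ξ :=
    isSchwartzOn_sphereAnnulus fun _ hξ => (contDiffAt_norm_zpow _ hξ).smul contDiffAt_id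
  obtain ⟨w, hw⟩ : IsSchwartzOn (sphereAnnulus V) fun ξ => ‖ξ‖ ^ (-1 : ℤ) • ξ - ξ :=
    isSchwartzOn_sphereAnnulus fun _ hξ =>
      ((contDiffAt_norm_zpow _ hξ).smul contDiffAt_id).sub contDiffAt_id
  refine ⟨fun p => (-(b ⟪p.1, p.2⟫ • v p.2), w p.2),
    max (SchwartzMap.seminorm ℝ 0 0 b * SchwartzMap.seminorm ℝ 0 0 v)
      (SchwartzMap.seminorm ℝ 0 0 w), by fun_prop, fun p => ?_, fun p hp => ?_⟩
  · rw [Prod.norm_mk, norm_neg, norm_smul]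
    gcongr <;> exact SchwartzMap.norm_le_seminorm ℝ _ _
  · have hb' : b ⟪p.1, p.2⟫ = ⟪p.1, p.2⟫ := (hb (mapsTo_inner_tangentSphereNhd hp)).symm
    have hv' : v p.2 = ‖p.2‖ ^ (-2 : ℤ) • p.2 := (hv (mapsTo_snd_tangentSphereNhd hp)).symm
    have hw' : w p.2 = ‖p.2‖ ^ (-1 : ℤ) • p.2 - p.2 := (hw (mapsTo_snd_tangentSphereNhd hp)).symm
    ext1
    · simp [hb', hv', tangentProj, sub_eq_add_neg, smul_smul, div_eq_mul_inv, zpow_neg]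
    · simp [hw', tangentProj]

lemma IsSchwartzOn.comp_tangentProj {f : V × V → F} (hf : IsSchwartzOn (tangentSphere V) f) :
    IsSchwartzOn (tangentSphereNhd V) (fun p => f (tangentProj p)) := by
  obtain ⟨τ, C, hτ, hC, hproj⟩ := exists_bounded_tangentProj_eq_add (V := V)
  refine (hf.comp_add_of_bounded hτ hC fun p hp => ?_).congr fun p hp => by rw [hproj p hp]
  beta_reduce
  rw [← hproj p hp]
  exact tangentProj_mem_tangentSphere (norm_pos_of_mem_tangentSphereNhd hp)

end TangentSphere

section RayTransform

variable {V : Type*} [NormedAddCommGroup V] [InnerProductSpace ℝ V] {F : Type*}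
  [NormedAddCommGroup F] [NormedSpace ℝ F]

/-- The ray `((x, ξ), t) ↦ x + tξ` completed by `⟨x, ξ⟩`, `ξ` and `t (1 - κ(ξ) |ξ|²)`. For bounded
`κ` it is proper, and for `κ(ξ) = |ξ|⁻²` the last of these components vanishes. -/
def completedRay (κ : V → ℝ) (q : (V × V) × ℝ) : (ℝ × V × ℝ) × V :=
  ((⟪q.1.1, q.1.2⟫, q.1.2, q.2 * (1 - κ q.1.2 * ⟪q.1.2, q.1.2⟫)), q.1.1 + q.2 • q.1.2)

lemma norm_completedRay_le_iff {κ : V → ℝ} {x ξ : V} {t Θ : ℝ} :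
    ‖completedRay κ ((x, ξ), t)‖ ≤ Θ ↔
      (‖⟪x, ξ⟫‖ ≤ Θ ∧ ‖ξ‖ ≤ Θ ∧ ‖t * (1 - κ ξ * ⟪ξ, ξ⟫)‖ ≤ Θ) ∧ ‖x + t • ξ‖ ≤ Θ := by
  simp only [completedRay, Prod.norm_mk, sup_le_iff]

lemma norm_snd_le_of_completedRay {κ : V → ℝ} {C : ℝ} (hκ : ∀ ξ, ‖κ ξ‖ ≤ C) (q : (V × V) × ℝ) :
    ‖q.2‖ ≤ (1 + C) * (1 + ‖completedRay κ q‖) ^ 2 := by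
  obtain ⟨⟨x, ξ⟩, t⟩ := q
  set Θ := ‖completedRay κ ((x, ξ), t)‖ with hΘ_def
  have hC : 0 ≤ C := (norm_nonneg _).trans (hκ 0)
  have hΘ : 0 ≤ Θ := norm_nonneg _
  obtain ⟨⟨hs, hξ, hr⟩, hy⟩ := norm_completedRay_le_iff.1 hΘ_def.ge
  have ht : t = t * (1 - κ ξ * ⟪ξ, ξ⟫) + κ ξ * (⟪x + t • ξ, ξ⟫ - ⟪x, ξ⟫) := by
    rw [inner_add_left, real_inner_smul_left]
    ring
  calc ‖t‖ ≤ ‖t * (1 - κ ξ * ⟪ξ, ξ⟫)‖ + ‖κ ξ‖ * (‖x + t • ξ‖ * ‖ξ‖ + ‖⟪x, ξ⟫‖) := by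
        conv_lhs => rw [ht]
        refine (norm_add_le _ _).trans ?_
        rw [norm_mul (κ ξ)]
        gcongr
        exact (norm_sub_le _ _).trans (by gcongr; exact norm_inner_le_norm _ _)
    _ ≤ Θ + C * (Θ * Θ + Θ) := by
        gcongr
        exact hκ ξ
    _ ≤ (1 + C) * (1 + Θ) ^ 2 := by nlinarith [mul_nonneg hC hΘ]

lemma norm_le_of_completedRay {κ : V → ℝ} {C : ℝ} (hκ : ∀ ξ, ‖κ ξ‖ ≤ C) (q : (V × V) × ℝ) :
    ‖q‖ ≤ (2 + C) * (1 + ‖completedRay κ q‖) ^ 3 := by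
  obtain ⟨⟨x, ξ⟩, t⟩ := q
  set Θ := ‖completedRay κ ((x, ξ), t)‖ with hΘ_def
  have hC : 0 ≤ C := (norm_nonneg _).trans (hκ 0)
  have hΘ : 0 ≤ Θ := norm_nonneg _
  obtain ⟨⟨-, hξ, -⟩, hy⟩ := norm_completedRay_le_iff.1 hΘ_def.ge
  have ht : ‖t‖ ≤ (1 + C) * (1 + Θ) ^ 2 := norm_snd_le_of_completedRay hκ ((x, ξ), t)
  have hΘ_one : Θ ≤ 1 + Θ := by linarith
  have hΘ_cube : 1 + Θ ≤ (1 + Θ) ^ 3 := le_self_pow₀ (by linarith) (by norm_num)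
  have hx : ‖x‖ ≤ (2 + C) * (1 + Θ) ^ 3 := by
    calc ‖x‖ ≤ ‖x + t • ξ‖ + ‖t • ξ‖ := by simpa using norm_sub_le (x + t • ξ) (t • ξ)
      _ ≤ Θ + (1 + C) * (1 + Θ) ^ 2 * Θ := by
          rw [norm_smul]
          gcongr
      _ ≤ (1 + Θ) ^ 3 + (1 + C) * (1 + Θ) ^ 2 * (1 + Θ) := by
          gcongr
          exact hΘ_one.trans hΘ_cube
      _ = (2 + C) * (1 + Θ) ^ 3 := by ring
  refine max_le (max_le hx ?_) (ht.trans ?_)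
  · calc ‖ξ‖ ≤ 1 * (1 + Θ) ^ 3 := by simpa using hξ.trans (hΘ_one.trans hΘ_cube)
      _ ≤ (2 + C) * (1 + Θ) ^ 3 := by
          gcongr
          linarith
  · gcongr <;> linarith

variable [FiniteDimensional ℝ V]

lemma IsSchwartzOn.comp_ray {f : V → F} (hf : IsSchwartzOn Set.univ f) :
    IsSchwartzOn (tangentSphereNhd V ×ˢ Set.univ)
      (fun q : (V × V) × ℝ => f (q.1.1 + q.2 • q.1.2)) := by
  obtain ⟨κ, hκ⟩ := isSchwartzOn_sphereAnnulus_norm_zpow (V := V) (-2)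
  have hone : IsSchwartzOn (Set.Icc (-1) 1 ×ˢ sphereAnnulus V ×ˢ {0})
      fun _ : ℝ × V × ℝ => (1 : ℝ) :=
    isSchwartzOn_of_contDiffOn contDiff_const.contDiffOn isOpen_univ
      (isCompact_Icc.prod (isCompact_sphereAnnulus.prod isCompact_singleton)) (Set.subset_univ _)
  have hgrowth : (completedRay κ).HasTemperateGrowth := by
    unfold completedRay
    fun_prop
  have hproper := norm_le_of_completedRay (κ.norm_le_seminorm ℝ)
  refine ((hone.tensor hf).comp hgrowth ⟨3, _, hproper⟩ fun q hq => ?_).congr fun q _ =>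
    (one_smul ℝ _).symm
  have hξ : κ q.1.2 = ‖q.1.2‖ ^ (-2 : ℤ) := (hκ (mapsTo_snd_tangentSphereNhd hq.1)).symm
  have hξ0 := (norm_pos_of_mem_tangentSphereNhd hq.1).ne'
  refine ⟨⟨mapsTo_inner_tangentSphereNhd hq.1, mapsTo_snd_tangentSphereNhd hq.1, ?_⟩, trivial⟩
  simp [completedRay, hξ, zpow_neg, hξ0]

lemma IsSchwartzField.isSchwartzOn_momRT {n m : ℕ} {f : (Fin m → Fin n) → En n → ℝ}
    (hf : IsSchwartzField f) (q : ℕ) :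
    IsSchwartzOn (tangentSphereNhd (En n)) (Function.uncurry (momRT q f)) := by
  have hcomponent (i : Fin m → Fin n) :
      IsSchwartzOn (tangentSphereNhd (En n) ×ˢ Set.univ) fun p : (En n × En n) × ℝ =>
        (p.2 ^ q * ∏ r, p.1.2 (i r)) • f i (p.1.1 + p.2 • p.1.2) := by
    obtain ⟨Φ, hΦ⟩ := hf i
    have hfi : IsSchwartzOn Set.univ (f i) := ⟨Φ, fun x _ => by rw [hΦ]⟩
    exact hfi.comp_ray.temperate_smul (by fun_prop)
  refine (IsSchwartzOn.sum Finset.univ fun i _ => hcomponent i).integral_right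
    (μ := volume) |>.congr fun p _ => ?_
  simp only [Function.uncurry, momRT, Finset.mul_sum, smul_eq_mul]
  congr! 3
  ring

end RayTransform

section JohnOperator

variable {n : ℕ} {S : Set (En n × En n)} {F : En n → En n → ℝ}

lemma IsSchwartzOn.uncurry_pdx (hF : IsSchwartzOn S (Function.uncurry F)) (hS : IsOpen S)
    (j : Fin n) : IsSchwartzOn S (Function.uncurry (pdx j F)) := by
  refine (hF.fderiv_apply hS (EuclideanSpace.single j 1, 0)).congr fun ⟨x, ξ⟩ hp => ?_
  have h := (hF.differentiableAt hS hp).hasFDerivAt.comp (f := (·, ξ)) x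
    (hasFDerivAt_prodMk_left x ξ)
  exact DFunLike.congr_fun h.fderiv _

lemma IsSchwartzOn.uncurry_pdxi (hF : IsSchwartzOn S (Function.uncurry F)) (hS : IsOpen S)
    (j : Fin n) : IsSchwartzOn S (Function.uncurry (pdxi j F)) := by
  refine (hF.fderiv_apply hS (0, EuclideanSpace.single j 1)).congr fun ⟨x, ξ⟩ hp => ?_
  have h := (hF.differentiableAt hS hp).hasFDerivAt.comp ξ (hasFDerivAt_prodMk_right x ξ)
  exact DFunLike.congr_fun h.fderiv _

lemma IsSchwartzOn.uncurry_johnOp (hF : IsSchwartzOn S (Function.uncurry F)) (hS : IsOpen S)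
    (i j : Fin n) : IsSchwartzOn S (Function.uncurry (johnOp i j F)) :=
  ((hF.uncurry_pdxi hS j).uncurry_pdx hS i).sub ((hF.uncurry_pdxi hS i).uncurry_pdx hS j)

lemma IsSchwartzOn.uncurry_johnIter (hF : IsSchwartzOn S (Function.uncurry F)) (hS : IsOpen S)
    (l : List (Fin n × Fin n)) : IsSchwartzOn S (Function.uncurry (johnIter l F)) := by
  induction l with
  | nil => exact hF
  | cons ij l ih => exact ih.uncurry_johnOp hS ij.1 ij.2

lemma isSchwartzOnTS_iff_isSchwartzOn_tangentSphere :
    IsSchwartzOnTS F ↔ IsSchwartzOn (tangentSphere (En n)) (Function.uncurry F) :=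
  exists_congr fun _ =>
    ⟨fun h p hp => h p.1 p.2 hp.1 hp.2, fun h x ξ hξ hx => h (x := (x, ξ)) ⟨hξ, hx⟩⟩

lemma IsSchwartzOn.isSchwartzOnTS_johnIter
    (hF : IsSchwartzOn (tangentSphereNhd (En n)) (Function.uncurry F))
    (l : List (Fin n × Fin n)) : IsSchwartzOnTS (johnIter l F) := by
  obtain ⟨Φ, hΦ⟩ := hF.uncurry_johnIter isOpen_tangentSphereNhd l
  exact isSchwartzOnTS_iff_isSchwartzOn_tangentSphere.2
    ⟨Φ, hΦ.mono tangentSphere_subset_tangentSphereNhd⟩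

end JohnOperator

lemma isSchwartzOn_norm_zpow_mul_sum {V : Type*} [NormedAddCommGroup V] [InnerProductSpace ℝ V]
    [FiniteDimensional ℝ V] {φ : ℕ → V × V → ℝ} {p : ℕ}
    (hφ : ∀ r ≤ p, IsSchwartzOn (tangentSphere V) (φ r)) (z : ℤ) (c : ℕ → ℝ) (e : ℕ → ℕ) :
    IsSchwartzOn (tangentSphereNhd V) fun q => ‖q.2‖ ^ z * ∑ r ∈ Finset.range (p + 1),
      c r * ‖q.2‖ ^ r * ⟪q.2, q.1⟫ ^ e r * φ r (tangentProj q) := by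
  have hnorm (k : ℤ) {f : V × V → ℝ} (hf : IsSchwartzOn (tangentSphereNhd V) f) :
      IsSchwartzOn (tangentSphereNhd V) fun q => ‖q.2‖ ^ k • f q :=
    hf.comp_smul (isSchwartzOn_sphereAnnulus_norm_zpow k) (by fun_prop) mapsTo_snd_tangentSphereNhd
  refine (hnorm z (.sum _ fun (r : ℕ) hr => hnorm r (IsSchwartzOn.temperate_smul
    (hφ r (Nat.lt_succ_iff.1 (Finset.mem_range.1 hr))).comp_tangentProj
    (g := fun q => c r * ⟪q.2, q.1⟫ ^ e r) (by fun_prop)))).congr fun q _ => ?_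
  simp only [smul_eq_mul, zpow_natCast]
  congr! 2
  ring

theorem john_of_chi_restricts_to_schwartz_general {n ℓ : ℕ} (m : ℤ) {φ : ℕ → En n → En n → ℝ}
    (hφ : ∀ r ≤ ℓ, IsSchwartzOnTS (φ r)) {ψ : En n → En n → ℝ}
    (hψ : ∀ x ξ : En n, ξ ≠ 0 → ψ x ξ = ‖ξ‖ ^ (m - 2 * ℓ - 1) * ∑ r ∈ Finset.range (ℓ + 1),
      (-1 : ℝ) ^ (ℓ - r) * ℓ.choose r * ‖ξ‖ ^ r * ⟪ξ, x⟫ ^ (ℓ - r) *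
        φ r (x - (⟪x, ξ⟫ / ‖ξ‖ ^ 2) • ξ) (‖ξ‖⁻¹ • ξ))
    {d : ℕ → ℕ} {g : (s : ℕ) → (Fin (d s) → Fin n) → En n → ℝ}
    (hg : ∀ s < ℓ, IsSchwartzField (g s)) {χ : En n → En n → ℝ}
    (hχ : ∀ x ξ : En n, ξ ≠ 0 → χ x ξ = (-1 : ℝ) ^ ℓ / ℓ.factorial * (ψ x ξ -
      ∑ s ∈ Finset.range ℓ, (-1 : ℝ) ^ s * ℓ.choose s * s.factorial * momRT (ℓ - s) (g s) x ξ))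
    (l : List (Fin n × Fin n)) : IsSchwartzOnTS (johnIter l χ) := by
  have hψ_schwartz : IsSchwartzOn (tangentSphereNhd (En n)) (Function.uncurry ψ) :=
    (isSchwartzOn_norm_zpow_mul_sum
      (fun r hr => isSchwartzOnTS_iff_isSchwartzOn_tangentSphere.1 (hφ r hr)) _ _ _).congr
      fun q hq => hψ q.1 q.2 (norm_pos_iff.1 (norm_pos_of_mem_tangentSphereNhd hq))
  have hg_schwartz := IsSchwartzOn.sum (Finset.range ℓ) fun s hs =>
    ((hg s (Finset.mem_range.1 hs)).isSchwartzOn_momRT (ℓ - s)).temperate_smul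
      (.const ((-1 : ℝ) ^ s * ℓ.choose s * s.factorial))
  have hχ_schwartz : IsSchwartzOn (tangentSphereNhd (En n)) (Function.uncurry χ) :=
    ((hψ_schwartz.sub hg_schwartz).temperate_smul (.const _)).congr
      fun q hq => hχ q.1 q.2 (norm_pos_iff.1 (norm_pos_of_mem_tangentSphereNhd hq))
  exact hχ_schwartz.isSchwartzOnTS_johnIter l

/-- under the same hypotheses as for `χ^ℓ` (statement 15), the
restriction to `TSⁿ⁻¹` of any `(m−ℓ+1)`-fold iterated John operator applied to
`χ^ℓ` belongs to `𝒮(TSⁿ⁻¹)`. -/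
theorem john_of_chi_restricts_to_schwartz
    (n m k ℓ : ℕ) (hℓ : ℓ ≤ k) (hkm : k ≤ m)
    (φ : ℕ → En n → En n → ℝ) (hφ : ∀ r, r ≤ k → IsSchwartzOnTS (φ r))
    (ψ : ℕ → En n → En n → ℝ)
    (hψ : ∀ p, p ≤ ℓ → ∀ x ξ : En n, ξ ≠ 0 →
      ψ p x ξ = ‖ξ‖ ^ ((m : ℤ) - 2 * p - 1) *
        ∑ r ∈ Finset.range (p + 1),
          (-1 : ℝ) ^ (p - r) * (p.choose r) * ‖ξ‖ ^ r * (⟪ξ, x⟫ : ℝ) ^ (p - r) *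
            φ r (x - ((⟪x, ξ⟫ : ℝ) / ‖ξ‖ ^ 2) • ξ) (‖ξ‖⁻¹ • ξ))
    (g : (s : ℕ) → (Fin (m - s) → Fin n) → En n → ℝ)
    (hg : ∀ s, s < ℓ → IsSchwartzField (g s) ∧ IsSymField (g s))
    (hrel : ∀ p, p < ℓ → ∀ x ξ : En n, ξ ≠ 0 →
      ψ p x ξ = ∑ s ∈ Finset.range (p + 1),
        (-1 : ℝ) ^ s * (p.choose s) * (s.factorial) * momRT (p - s) (g s) x ξ)
    (χ : En n → En n → ℝ)
    (hχ : ∀ x ξ : En n, χ x ξ = ((-1 : ℝ) ^ ℓ / (ℓ.factorial : ℝ)) *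
      (ψ ℓ x ξ - ∑ s ∈ Finset.range ℓ,
        (-1 : ℝ) ^ s * (ℓ.choose s) * (s.factorial) * momRT (ℓ - s) (g s) x ξ)) :
    ∀ idx jdx : Fin (m - ℓ + 1) → Fin n,
      IsSchwartzOnTS
        (johnIter ((List.finRange (m - ℓ + 1)).map (fun s => (idx s, jdx s))) χ) := by
  intro idx jdx
  exact john_of_chi_restricts_to_schwartz_general m (fun r hr => hφ r (hr.trans hℓ))
    (hψ ℓ le_rfl) (fun s hs => (hg s hs).1) (fun x ξ _ => hχ x ξ) _
end
end
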